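/- arXiv:2108.01024 — 3 statements merged into one kernel-verified Lean document; each statement's English description precedes it below -/
import Mathlib

section
/- For every integer n ≥ 1 there exist polynomials p(q) and p_s(q) with integer coefficients, one polynomial p_s for each isomorphism class s of superfigurations on at most n points, such that for every finite projective plane Π of order q, the number of ordered n-arcs in Π satisfies C_n(Π) = p(q) + Σ_s p_s(q) · A_s(Π), where the sum runs over all isomorphism classes s of superfigurations on at most n points. -/
/-- A linear space, encoded by its point set `P` (a finite set of natural numbers) and its
set `L` of lines: every line is a subset of `P` with at least 2 points, and any two
distinct points lie on exactly one line. -/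
def IsLinearSpace (P : Finset ℕ) (L : Finset (Finset ℕ)) : Prop :=
  (∀ l ∈ L, l ⊆ P ∧ 2 ≤ l.card) ∧
    ∀ a ∈ P, ∀ b ∈ P, a ≠ b → ∃! l, l ∈ L ∧ a ∈ l ∧ b ∈ l

/-- A superfiguration: a linear space in which every point lies on at least 3 full lines
(lines containing at least 3 points). -/
def IsSuperfiguration (P : Finset ℕ) (L : Finset (Finset ℕ)) : Prop :=
  IsLinearSpace P L ∧ ∀ p ∈ P, 3 ≤ (L.filter fun l => p ∈ l ∧ 3 ≤ l.card).card

/-- Two linear spaces (given as pairs of a point set and a line set) are isomorphic if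
there is a bijection of their point sets carrying the lines of one exactly to the lines of
the other. -/
def LSIso (s t : Finset ℕ × Finset (Finset ℕ)) : Prop :=
  ∃ e : ℕ → ℕ, Set.BijOn e ↑s.1 ↑t.1 ∧ t.2 = s.2.image (Finset.image e)

/-- An ordered `n`-arc in a projective plane with point type `Pt` and line type `Ln`:
an injective map `Fin n → Pt` no 3 of whose points are collinear. -/
def IsPlaneArc {Pt : Type} (Ln : Type) [Membership Pt Ln] {n : ℕ} (τ : Fin n → Pt) : Prop :=
  Function.Injective τ ∧
    ∀ a b c : Fin n, a ≠ b → a ≠ c → b ≠ c →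
      ¬ ∃ l : Ln, τ a ∈ l ∧ τ b ∈ l ∧ τ c ∈ l

/-- A strong realization in a projective plane `(Pt, Ln)` of a superfiguration with point
set `P` and line set `L`: an injective map from the points of the superfiguration to `Pt`
such that three distinct points lie on a common full line of the superfiguration if and
only if their images are collinear in the plane. -/
def IsStrongReal {Pt : Type} (Ln : Type) [Membership Pt Ln]
    (P : Finset ℕ) (L : Finset (Finset ℕ)) (σ : {x // x ∈ P} → Pt) : Prop :=
  Function.Injective σ ∧
    ∀ a b c : {x // x ∈ P}, a ≠ b → a ≠ c → b ≠ c →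
      ((∃ l ∈ L, ↑a ∈ l ∧ ↑b ∈ l ∧ ↑c ∈ l ∧ 3 ≤ l.card) ↔
        ∃ m : Ln, σ a ∈ m ∧ σ b ∈ m ∧ σ c ∈ m)

/-!
An injective map from a finite set to the points of a plane pulls collinearity back to a ternary
relation `T`, and one counts the maps with a given `T`. If every point lies on at least three full
lines of `T`, this is the number of strong realizations of a superfiguration. Otherwise some point
`x` lies on at most two full lines. Given a realization of `T - x`, the positions for `x` that
preserve the collinearities prescribed by `T` form the whole plane, a line or a single point, so
their number is a polynomial in the order; the number of those already occupied by another point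
depends only on `T`. Such a choice of position realizes some relation `U ≥ T` with `U - x = T - x`.
Hence, writing `#T` for the number of realizations of `T`,

  `#T + ∑ #U = poly(q) * #(T - x)`,

where `U` runs over the proper extensions of this kind, and induction on the number of points,
together with downward induction on `T`, expresses `#T` through superfigurations. An `n`-arc is a
realization of the least collinearity relation on `n` points.
-/

open Configuration Finset Polynomial

section CollinearityRelations

variable {α β : Type*}

/-- Ternary relations, used to record which triples of points are collinear. Degenerate triples
count as collinear, so the relation determines all lines, not only the full ones. -/
abbrev TernaryRel (α : Type*) := α → α → α → Prop

/-- Two of the three points agree. As a relation on `n` points this is the collinearity relation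
of an `n`-arc. -/
def Coincident (a b c : α) : Prop := a = b ∨ a = c ∨ b = c

lemma not_coincident_iff {a b c : α} : ¬ Coincident a b c ↔ a ≠ b ∧ a ≠ c ∧ b ≠ c := by
  simp only [Coincident, not_or, ne_eq]

lemma Coincident.map {a b c : α} (h : Coincident a b c) (f : α → β) :
    Coincident (f a) (f b) (f c) :=
  h.imp (congrArg f) (Or.imp (congrArg f) (congrArg f))

/-- The pullback of a ternary relation along a map. -/
def TernaryRel.comap (f : α → β) (T : TernaryRel β) : TernaryRel α :=
  fun a b c => T (f a) (f b) (f c)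

/-- The collinearity relations of linear spaces; `trans` says that two distinct points lie on
only one line. -/
structure IsCollinearity (T : TernaryRel α) : Prop where
  refl : ∀ a b, T a a b
  rotate : ∀ {a b c}, T a b c → T b c a
  swap : ∀ {a b c}, T a b c → T a c b
  trans : ∀ {a b c d}, a ≠ b → T a b c → T a b d → T a c d

namespace IsCollinearity

variable {T : TernaryRel α}

lemma of_coincident (hT : IsCollinearity T) {a b c : α} (h : Coincident a b c) : T a b c := by
  rcases h with rfl | rfl | rfl
  · exact hT.refl _ _
  · exact hT.swap (hT.refl _ _)
  · exact hT.rotate (hT.rotate (hT.refl _ _))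

lemma of_three (hT : IsCollinearity T) {a b c d e : α} (hab : a ≠ b) (hc : T a b c)
    (hd : T a b d) (he : T a b e) : T c d e := by
  by_cases hca : c = a
  · subst hca
    exact hT.trans hab hd he
  · have hcad : T c a d := hT.swap (hT.rotate (hT.trans hab hc hd))
    have hcae : T c a e := hT.swap (hT.rotate (hT.trans hab hc he))
    exact hT.trans hca hcad hcae

lemma comap {T : TernaryRel β} (hT : IsCollinearity T) {f : α → β} (hf : f.Injective) :
    IsCollinearity (T.comap f) where
  refl _ _ := hT.refl _ _
  rotate := hT.rotate
  swap := hT.swap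
  trans hab := hT.trans (hf.ne hab)

end IsCollinearity

variable [Fintype α]

open Classical in
/-- The line through `a` and `b` in the linear space with collinearity relation `T`; a
junk value when `a = b`. -/
noncomputable def lineThrough (T : TernaryRel α) (a b : α) : Finset α := {c | T a b c}

open Classical in
/-- The lines of the linear space with collinearity relation `T`. -/
noncomputable def linesOf (T : TernaryRel α) : Finset (Finset α) :=
  univ.offDiag.image fun p => lineThrough T p.1 p.2

open Classical in
/-- The full lines through the point `x`. -/
noncomputable def fullLines (T : TernaryRel α) (x : α) : Finset (Finset α) :=
  {l ∈ linesOf T | x ∈ l ∧ 3 ≤ #l}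

variable {T : TernaryRel α} {a b c x : α} {l : Finset α}

lemma mem_lineThrough : c ∈ lineThrough T a b ↔ T a b c := by
  simp only [lineThrough, mem_filter_univ]

lemma mem_linesOf : l ∈ linesOf T ↔ ∃ a b, a ≠ b ∧ lineThrough T a b = l := by
  simp only [linesOf, mem_image, mem_offDiag, mem_univ, true_and, Prod.exists]

lemma mem_fullLines : l ∈ fullLines T x ↔ l ∈ linesOf T ∧ x ∈ l ∧ 3 ≤ #l := by
  simp only [fullLines, mem_filter]

lemma exists_pair_of_mem_fullLines (hl : l ∈ fullLines T x) :
    ∃ a b : {y // y ≠ x}, a ≠ b ∧ ↑a ∈ l ∧ ↑b ∈ l := by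
  classical
  obtain ⟨-, hx, hcard⟩ := mem_fullLines.1 hl
  have : 1 < #(l.erase x) := by
    rw [card_erase_of_mem hx]
    omega
  obtain ⟨a, ha, b, hb, hab⟩ := one_lt_card.1 this
  rw [mem_erase] at ha hb
  exact ⟨⟨a, ha.1⟩, ⟨b, hb.1⟩, fun h => hab congr($h), ha.2, hb.2⟩

namespace IsCollinearity

lemma left_mem_lineThrough (hT : IsCollinearity T) : a ∈ lineThrough T a b :=
  mem_lineThrough.2 (hT.of_coincident (.inr (.inl rfl)))

lemma right_mem_lineThrough (hT : IsCollinearity T) : b ∈ lineThrough T a b :=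
  mem_lineThrough.2 (hT.of_coincident (.inr (.inr rfl)))

lemma mem_iff_of_mem_linesOf (hT : IsCollinearity T) (hl : l ∈ linesOf T) (ha : a ∈ l)
    (hb : b ∈ l) (hab : a ≠ b) : c ∈ l ↔ T a b c := by
  obtain ⟨p, r, hpr, rfl⟩ := mem_linesOf.1 hl
  rw [mem_lineThrough] at ha hb ⊢
  have hp : T a b p := hT.of_three hpr ha hb (hT.of_coincident (.inr (.inl rfl)))
  have hr : T a b r := hT.of_three hpr ha hb (hT.of_coincident (.inr (.inr rfl)))
  exact ⟨hT.of_three hpr ha hb, hT.of_three hab hp hr⟩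

lemma existsUnique_line (hT : IsCollinearity T) (hab : a ≠ b) :
    ∃! l, l ∈ linesOf T ∧ a ∈ l ∧ b ∈ l := by
  refine ⟨lineThrough T a b, ⟨mem_linesOf.2 ⟨a, b, hab, rfl⟩, hT.left_mem_lineThrough,
    hT.right_mem_lineThrough⟩, ?_⟩
  rintro l ⟨hl, ha, hb⟩
  ext c
  rw [hT.mem_iff_of_mem_linesOf hl ha hb hab, mem_lineThrough]

lemma two_le_card_of_mem_linesOf (hT : IsCollinearity T) (hl : l ∈ linesOf T) : 2 ≤ #l := by
  obtain ⟨a, b, hab, rfl⟩ := mem_linesOf.1 hl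
  exact one_lt_card.2 ⟨a, hT.left_mem_lineThrough, b, hT.right_mem_lineThrough, hab⟩

lemma exists_mem_fullLines (hT : IsCollinearity T) (hab : a ≠ b) (hac : a ≠ c) (hbc : b ≠ c)
    (h : T a b c) : ∃ l ∈ fullLines T a, b ∈ l ∧ c ∈ l :=
  ⟨lineThrough T a b, mem_fullLines.2 ⟨mem_linesOf.2 ⟨a, b, hab, rfl⟩, hT.left_mem_lineThrough,
    two_lt_card.2 ⟨a, hT.left_mem_lineThrough, b, hT.right_mem_lineThrough, c,
      mem_lineThrough.2 h, hab, hac, hbc⟩⟩, hT.right_mem_lineThrough, mem_lineThrough.2 h⟩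

end IsCollinearity

end CollinearityRelations

section ProjectivePlanes

variable {P L : Type*} [Membership P L]

/-- Collinearity of three points of an incidence structure with lines `L`. -/
def CollinearTriple (L : Type*) [Membership P L] : TernaryRel P :=
  fun a b c => ∃ l : L, a ∈ l ∧ b ∈ l ∧ c ∈ l

lemma eq_of_two_mem_lines [Nondegenerate P L] {a b : P} {l m : L} (hab : a ≠ b) (hal : a ∈ l)
    (hbl : b ∈ l) (ham : a ∈ m) (hbm : b ∈ m) : l = m :=
  (Nondegenerate.eq_or_eq hal hbl ham hbm).resolve_left hab

lemma collinearTriple_iff_mem [Nondegenerate P L] {a b c : P} {l : L} (hbc : b ≠ c) (hb : b ∈ l)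
    (hc : c ∈ l) : CollinearTriple L a b c ↔ a ∈ l :=
  ⟨fun ⟨_, ham, hbm, hcm⟩ => eq_of_two_mem_lines hbc hbm hcm hb hc ▸ ham,
    fun ha => ⟨l, ha, hb, hc⟩⟩

variable [ProjectivePlane P L]

variable (L) in
lemma exists_line_through_pair (a b : P) : ∃ l : L, a ∈ l ∧ b ∈ l := by
  obtain ⟨-, p, -, -, l, -, -, -, -, hpl, -⟩ := ProjectivePlane.exists_config (P := P) (L := L)
  rcases ne_or_eq a b with hab | rfl
  · exact ⟨_, HasLines.mkLine_ax hab⟩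
  rcases ne_or_eq a p with hap | rfl
  · exact ⟨_, (HasLines.mkLine_ax (L := L) hap).1, (HasLines.mkLine_ax hap).1⟩
  · exact ⟨l, hpl, hpl⟩

variable (P L) in
lemma isCollinearity_collinearTriple : IsCollinearity (CollinearTriple L : TernaryRel P) where
  refl a b := by
    obtain ⟨l, ha, hb⟩ := exists_line_through_pair L a b
    exact ⟨l, ha, ha, hb⟩
  rotate := fun ⟨l, ha, hb, hc⟩ => ⟨l, hb, hc, ha⟩
  swap := fun ⟨l, ha, hb, hc⟩ => ⟨l, ha, hc, hb⟩
  trans := by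
    rintro a b c d hab ⟨l, hal, hbl, hcl⟩ ⟨m, ham, hbm, hdm⟩
    obtain rfl := eq_of_two_mem_lines hab hal hbl ham hbm
    exact ⟨l, hal, hcl, hdm⟩

variable [Finite P] [Finite L]

lemma order_eq_of_ncard_line {q : ℕ} (h : ∀ l : L, Nat.card {x : P // x ∈ l} = q + 1) :
    ProjectivePlane.order P L = q := by
  obtain ⟨-, -, -, l, -⟩ := ProjectivePlane.exists_config (P := P) (L := L)
  have hl : Nat.card {x : P // x ∈ l} = ProjectivePlane.order P L + 1 :=
    ProjectivePlane.pointCount_eq P l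
  exact Nat.succ_injective (hl.symm.trans (h l))

/-- The number of common points of `k ≤ 2` distinct lines, as a polynomial in the order of the
plane. -/
noncomputable def commonPointsPoly : ℕ → ℤ[X]
  | 0 => X ^ 2 + X + 1
  | 1 => X + 1
  | _ => 1

lemma ncard_common_points (S : Finset L) (hS : #S ≤ 2) :
    ({y : P | ∀ m ∈ S, y ∈ m}.ncard : ℤ) =
      (commonPointsPoly #S).eval (ProjectivePlane.order P L : ℤ) := by
  classical
  have := Fintype.ofFinite P
  obtain hcard | hcard | hcard : #S = 0 ∨ #S = 1 ∨ #S = 2 := by omega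
  · obtain rfl := card_eq_zero.1 hcard
    simp [commonPointsPoly, Set.ncard_univ, ProjectivePlane.card_points P L]
  · obtain ⟨m, rfl⟩ := card_eq_one.1 hcard
    have hm : {y : P | y ∈ m}.ncard = ProjectivePlane.order P L + 1 :=
      ProjectivePlane.pointCount_eq P m
    simp [commonPointsPoly, hm]
  · obtain ⟨m, m', hmm', rfl⟩ := card_eq_two.1 hcard
    obtain ⟨y, hy, hy_unique⟩ := HasPoints.existsUnique_point P L m m' hmm'
    have : {z : P | z ∈ m ∧ z ∈ m'} = {y} := Set.eq_singleton_iff_unique_mem.2 ⟨hy, hy_unique⟩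
    simp [hcard, commonPointsPoly, this]

end ProjectivePlanes

section Realizations

variable {α β P L : Type*} [Membership P L]

variable (P L) in
/-- The injective maps to the points of a plane under which the collinear triples are exactly
those of `T`. -/
def realizations (T : TernaryRel α) : Set (α → P) :=
  {σ | σ.Injective ∧ (CollinearTriple L).comap σ = T}

lemma isCollinearity_of_mem_realizations [ProjectivePlane P L] {T : TernaryRel α} {σ : α → P}
    (hσ : σ ∈ realizations P L T) : IsCollinearity T :=
  hσ.2 ▸ (isCollinearity_collinearTriple P L).comap hσ.1

lemma ncard_realizations_comap (e : α ≃ β) (T : TernaryRel β) :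
    (realizations P L (T.comap e)).ncard = (realizations P L T).ncard := by
  refine Nat.card_congr (((e.symm.arrowCongr (Equiv.refl P)).subtypeEquiv fun σ => ?_).symm)
  have hT : (CollinearTriple L).comap (σ ∘ e) = T.comap e ↔ (CollinearTriple L).comap σ = T :=
    ⟨fun h => by
      funext a b c
      simpa [TernaryRel.comap] using congr($h (e.symm a) (e.symm b) (e.symm c)),
    fun h => congrArg (TernaryRel.comap e) h⟩
  exact (and_congr (e.injective_comp σ) hT).symm

lemma mem_realizations_iff [ProjectivePlane P L] {T : TernaryRel α} {σ : α → P}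
    (hT : ∀ {a b c}, Coincident a b c → T a b c) :
    σ ∈ realizations P L T ↔ σ.Injective ∧ ∀ a b c, ¬ Coincident a b c →
      (T a b c ↔ CollinearTriple L (σ a) (σ b) (σ c)) := by
  refine and_congr_right fun _ => ⟨fun h a b c _ => by rw [← h]; rfl, fun h => ?_⟩
  funext a b c
  by_cases habc : Coincident a b c
  · exact propext (iff_of_true
      ((isCollinearity_collinearTriple P L).of_coincident (habc.map σ)) (hT habc))
  · exact propext (h a b c habc).symm

end Realizations

section Extensions

variable {α P L : Type*} [Membership P L] {T : TernaryRel α} {x : α}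

/-- The restriction of `T` to the complement of the point `x`. -/
def TernaryRel.delete (T : TernaryRel α) (x : α) : TernaryRel {y // y ≠ x} :=
  T.comap Subtype.val

variable (L) in
/-- The positions for `x` that preserve all collinearities of `x` prescribed by `T`, given the
positions `τ` of the other points. Positions occupied by `τ` are not excluded. -/
def extensionLocus (T : TernaryRel α) (x : α) (τ : {y // y ≠ x} → P) : Set P :=
  {y | ∀ a b : {y // y ≠ x}, T x a b → CollinearTriple L y (τ a) (τ b)}

/-- The points other than `x` that satisfy all collinearities of `x`. -/
def occupiedPoints (T : TernaryRel α) (x : α) : Set {y // y ≠ x} :=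
  {p | ∀ a b : {y // y ≠ x}, T x a b → T p a b}

lemma extensionLocus_inter_range {τ : {y // y ≠ x} → P}
    (hτ : τ ∈ realizations P L (T.delete x)) :
    extensionLocus L T x τ ∩ Set.range τ = τ '' occupiedPoints T x := by
  have hdel (a b c) : CollinearTriple L (τ a) (τ b) (τ c) ↔ T a b c :=
    iff_of_eq congr($(hτ.2) a b c)
  rw [Set.inter_comm, ← Set.image_preimage_eq_range_inter]
  congr 1
  ext p
  exact forall₃_congr fun a b _ => hdel p a b

section Finite

variable [Fintype α] [ProjectivePlane P L]

lemma exists_line_of_mem_fullLines (hT : IsCollinearity T) {τ : {y // y ≠ x} → P}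
    (hτ : τ ∈ realizations P L (T.delete x)) {l : Finset α} (hl : l ∈ fullLines T x) :
    ∃ m : L, ∀ c : {y // y ≠ x}, τ c ∈ m ↔ ↑c ∈ l := by
  obtain ⟨a, b, hab, ha, hb⟩ := exists_pair_of_mem_fullLines hl
  obtain ⟨m, ham, hbm⟩ := exists_line_through_pair L (τ a) (τ b)
  refine ⟨m, fun c => ?_⟩
  have hdel : CollinearTriple L (τ c) (τ a) (τ b) ↔ T c a b := iff_of_eq congr($(hτ.2) c a b)
  rw [← collinearTriple_iff_mem (hτ.1.ne hab) ham hbm, hdel,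
    hT.mem_iff_of_mem_linesOf (mem_fullLines.1 hl).1 ha hb (Subtype.coe_ne_coe.2 hab)]
  exact ⟨hT.rotate, fun h => hT.rotate (hT.rotate h)⟩

lemma extensionLocus_eq (hT : IsCollinearity T) {τ : {y // y ≠ x} → P} (hτ : τ.Injective)
    {m : fullLines T x → L} (hm : ∀ l (c : {y // y ≠ x}), τ c ∈ m l ↔ ↑c ∈ l.1) :
    extensionLocus L T x τ = {y | ∀ l, y ∈ m l} := by
  ext y
  constructor
  · rintro hy ⟨l, hl⟩
    obtain ⟨a, b, hab, ha, hb⟩ := exists_pair_of_mem_fullLines hl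
    obtain ⟨hline, hxl, -⟩ := mem_fullLines.1 hl
    have hxab : T x a b := (hT.mem_iff_of_mem_linesOf hline hxl ha a.2.symm).1 hb
    exact (collinearTriple_iff_mem (hτ.ne hab) ((hm _ _).2 ha) ((hm _ _).2 hb)).1 (hy a b hxab)
  · intro hy a b hxab
    rcases eq_or_ne a b with rfl | hab
    · exact (isCollinearity_collinearTriple P L).of_coincident (.inr (.inr rfl))
    · obtain ⟨l, hl, ha, hb⟩ :=
        hT.exists_mem_fullLines a.2.symm b.2.symm (Subtype.coe_ne_coe.2 hab) hxab
      exact ⟨m ⟨l, hl⟩, hy _, (hm _ _).2 ha, (hm _ _).2 hb⟩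

lemma fullLines_ext {l l' : Finset α} (hl : l ∈ fullLines T x) (hl' : l' ∈ fullLines T x)
    (h : ∀ c : {y // y ≠ x}, ↑c ∈ l ↔ ↑c ∈ l') : l = l' := by
  ext c
  by_cases hc : c = x
  · subst hc
    exact iff_of_true (mem_fullLines.1 hl).2.1 (mem_fullLines.1 hl').2.1
  · exact h ⟨c, hc⟩

variable [Finite P] [Finite L]

lemma ncard_extensionLocus (hT : IsCollinearity T) (hx : #(fullLines T x) ≤ 2)
    {τ : {y // y ≠ x} → P} (hτ : τ ∈ realizations P L (T.delete x)) :
    ((extensionLocus L T x τ).ncard : ℤ) =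
      (commonPointsPoly #(fullLines T x)).eval (ProjectivePlane.order P L : ℤ) := by
  classical
  choose m hm using fun l : fullLines T x => exists_line_of_mem_fullLines hT hτ l.2
  have hm_inj : m.Injective := fun l l' h =>
    Subtype.ext (fullLines_ext l.2 l'.2 fun c => by rw [← hm, ← hm, h])
  have hcard : #(univ.image m) = #(fullLines T x) := by
    rw [card_image_of_injective _ hm_inj, card_univ, Fintype.card_coe]
  rw [← hcard, ← ncard_common_points _ (hcard.trans_le hx), extensionLocus_eq hT hτ.1 hm]
  simp only [mem_image, mem_univ, true_and, forall_exists_index, forall_apply_eq_imp_iff]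

lemma ncard_extensionLocus_sdiff_range (hT : IsCollinearity T) (hx : #(fullLines T x) ≤ 2)
    {τ : {y // y ≠ x} → P} (hτ : τ ∈ realizations P L (T.delete x)) :
    ((extensionLocus L T x τ \ Set.range τ).ncard : ℤ) =
      (commonPointsPoly #(fullLines T x) - C ((occupiedPoints T x).ncard : ℤ)).eval
        (ProjectivePlane.order P L : ℤ) := by
  have hsplit := Set.ncard_inter_add_ncard_sdiff_eq_ncard (extensionLocus L T x τ) (Set.range τ)
  rw [extensionLocus_inter_range hτ, Set.ncard_image_of_injective _ hτ.1] at hsplit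
  rw [eval_sub, eval_C, ← ncard_extensionLocus hT hx hτ, ← hsplit]
  push_cast
  ring

end Finite

variable (P L) in
/-- The injective maps that realize `T` away from `x` and preserve the collinearities
prescribed by `T`, possibly creating further ones through `x`. -/
def weakRealizations (T : TernaryRel α) (x : α) : Set (α → P) :=
  {σ | σ.Injective ∧ T ≤ (CollinearTriple L).comap σ ∧
    ((CollinearTriple L).comap σ).delete x = T.delete x}

lemma injective_iff_restrict {σ : α → P} :
    σ.Injective ↔ (σ ∘ Subtype.val : {y // y ≠ x} → P).Injective ∧
      σ x ∉ Set.range (σ ∘ Subtype.val : {y // y ≠ x} → P) := by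
  have hinsert : insert x {y | y ≠ x} = Set.univ := by
    ext y
    simp [em]
  have hrange : Set.range (σ ∘ Subtype.val : {y // y ≠ x} → P) = σ '' {y | y ≠ x} := by
    rw [Set.range_comp, Subtype.range_coe_subtype]
  rw [hrange, ← Set.injOn_univ, ← hinsert, Set.injOn_insert (by simp), Set.injOn_iff_injective]
  rfl

lemma le_comap_of_mem_extensionLocus [ProjectivePlane P L] (hT : IsCollinearity T) {σ : α → P}
    (hσ : ((CollinearTriple L).comap σ).delete x = T.delete x)
    (hσx : σ x ∈ extensionLocus L T x (σ ∘ Subtype.val)) : T ≤ (CollinearTriple L).comap σ := by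
  intro a b c habc
  have hC := isCollinearity_collinearTriple P L
  by_cases hdeg : Coincident a b c
  · exact hC.of_coincident (hdeg.map σ)
  obtain ⟨hab, hac, hbc⟩ := not_coincident_iff.1 hdeg
  by_cases ha : a = x
  · subst ha
    exact hσx ⟨b, hab.symm⟩ ⟨c, hac.symm⟩ habc
  by_cases hb : b = x
  · subst hb
    exact hC.rotate (hC.rotate (hσx ⟨c, hbc.symm⟩ ⟨a, ha⟩ (hT.rotate habc)))
  by_cases hc : c = x
  · subst hc
    exact hC.rotate (hσx ⟨a, ha⟩ ⟨b, hb⟩ (hT.rotate (hT.rotate habc)))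
  · exact (iff_of_eq congr($hσ ⟨a, ha⟩ ⟨b, hb⟩ ⟨c, hc⟩)).2 habc

lemma mem_weakRealizations_iff [ProjectivePlane P L] (hT : IsCollinearity T) {σ : α → P} :
    σ ∈ weakRealizations P L T x ↔
      σ ∘ Subtype.val ∈ realizations P L (T.delete x) ∧
        σ x ∈ extensionLocus L T x (σ ∘ Subtype.val) \
          Set.range (σ ∘ Subtype.val : {y // y ≠ x} → P) := by
  constructor
  · rintro ⟨hinj, hle, hdel⟩
    obtain ⟨hinj', hx⟩ := injective_iff_restrict.1 hinj
    exact ⟨⟨hinj', hdel⟩, fun a b => hle x a b, hx⟩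
  · rintro ⟨⟨hinj, hdel⟩, hlocus, hx⟩
    exact ⟨injective_iff_restrict.2 ⟨hinj, hx⟩, le_comap_of_mem_extensionLocus hT hdel hlocus,
      hdel⟩

open Classical in
/-- A weak realization is a realization of `T.delete x` together with an admissible unoccupied
position for `x`. -/
noncomputable def weakRealizationsEquiv [ProjectivePlane P L] (hT : IsCollinearity T) (x : α) :
    weakRealizations P L T x ≃ Σ τ : realizations P L (T.delete x),
      ↥(extensionLocus L T x τ.1 \ Set.range τ.1) :=
  (Equiv.subtypeEquiv (q := fun p : P × ({y // y ≠ x} → P) => p.2 ∈ realizations P L (T.delete x) ∧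
      p.1 ∈ extensionLocus L T x p.2 \ Set.range p.2)
    (Equiv.funSplitAt x P) fun _ => mem_weakRealizations_iff hT).trans
  { toFun p := ⟨⟨p.1.2, p.2.1⟩, ⟨p.1.1, p.2.2⟩⟩
    invFun s := ⟨(s.2.1, s.1.1), s.1.2, s.2.2⟩ }

lemma ncard_weakRealizations [Fintype α] [ProjectivePlane P L] [Finite P] [Finite L]
    (hT : IsCollinearity T) (hx : #(fullLines T x) ≤ 2) :
    ((weakRealizations P L T x).ncard : ℤ) =
      (commonPointsPoly #(fullLines T x) - C ((occupiedPoints T x).ncard : ℤ)).eval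
        (ProjectivePlane.order P L : ℤ) * (realizations P L (T.delete x)).ncard := by
  classical
  have := Fintype.ofFinite (realizations P L (T.delete x))
  rw [← Nat.card_coe_set_eq, Nat.card_congr (weakRealizationsEquiv hT x), Nat.card_sigma]
  simp only [Nat.card_coe_set_eq, Nat.cast_sum]
  rw [sum_congr rfl fun τ _ => ncard_extensionLocus_sdiff_range hT hx τ.2, sum_const,
    card_univ, ← Nat.card_eq_fintype_card, Nat.card_coe_set_eq, nsmul_eq_mul, mul_comm]

open Classical in
/-- The relations containing `T` that differ from `T` only at triples through `x`. -/
noncomputable def extensionsAt [Fintype α] (T : TernaryRel α) (x : α) : Finset (TernaryRel α) :=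
  {U | T ≤ U ∧ U.delete x = T.delete x}

lemma mem_extensionsAt [Fintype α] {U : TernaryRel α} :
    U ∈ extensionsAt T x ↔ T ≤ U ∧ U.delete x = T.delete x := by
  simp only [extensionsAt, mem_filter_univ]

lemma sum_ncard_realizations_extensionsAt [Fintype α] [Finite P] :
    ∑ U ∈ extensionsAt T x, (realizations P L U).ncard = (weakRealizations P L T x).ncard := by
  classical
  have := Fintype.ofFinite P
  rw [Set.ncard_eq_toFinset_card', card_eq_sum_card_fiberwise
    (f := fun σ => (CollinearTriple L).comap σ) (t := extensionsAt T x)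
    fun σ hσ => mem_extensionsAt.2 (Set.mem_toFinset.1 hσ).2]
  refine sum_congr rfl fun U hU => ?_
  rw [Set.ncard_eq_toFinset_card']
  congr 1
  ext σ
  rw [Set.mem_toFinset, mem_filter, Set.mem_toFinset]
  constructor
  · rintro ⟨hinj, rfl⟩
    exact ⟨⟨hinj, mem_extensionsAt.1 hU⟩, rfl⟩
  · rintro ⟨⟨hinj, -⟩, hσ⟩
    exact ⟨hinj, hσ⟩

end Extensions

section Superfigurations

variable {α β : Type*}

/-- Some line in `L` is full and contains the three points. -/
def OnFullLine (L : Finset (Finset α)) (a b c : α) : Prop :=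
  ∃ l ∈ L, a ∈ l ∧ b ∈ l ∧ c ∈ l ∧ 3 ≤ #l

lemma mem_image_iff_of_injOn [DecidableEq β] {e : α → β} {S : Set α} (he : S.InjOn e)
    {l : Finset α} (hl : ↑l ⊆ S) {a : α} (ha : a ∈ S) : e a ∈ l.image e ↔ a ∈ l := by
  rw [← mem_coe, coe_image, he.mem_image_iff hl ha, mem_coe]

lemma onFullLine_image [DecidableEq β] {e : α → β} {S : Set α} (he : S.InjOn e)
    {L : Finset (Finset α)} (hL : ∀ l ∈ L, ↑l ⊆ S) {a b c : α} (ha : a ∈ S) (hb : b ∈ S)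
    (hc : c ∈ S) :
    OnFullLine (L.image (Finset.image e)) (e a) (e b) (e c) ↔ OnFullLine L a b c := by
  simp only [OnFullLine, exists_mem_image]
  refine exists_congr fun l => and_congr_right fun hl => ?_
  rw [mem_image_iff_of_injOn he (hL l hl) ha, mem_image_iff_of_injOn he (hL l hl) hb,
    mem_image_iff_of_injOn he (hL l hl) hc, card_image_of_injOn (he.mono (hL l hl))]

lemma IsCollinearity.iff_coincident_or_onFullLine [Fintype α] {T : TernaryRel α}
    (hT : IsCollinearity T) {a b c : α} :
    T a b c ↔ Coincident a b c ∨ OnFullLine (linesOf T) a b c := by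
  constructor
  · intro h
    by_cases habc : Coincident a b c
    · exact .inl habc
    obtain ⟨hab, hac, hbc⟩ := not_coincident_iff.1 habc
    obtain ⟨l, hl, hb, hc⟩ := hT.exists_mem_fullLines hab hac hbc h
    obtain ⟨hline, ha, hcard⟩ := mem_fullLines.1 hl
    exact .inr ⟨l, hline, ha, hb, hc, hcard⟩
  · rintro (h | ⟨l, hl, ha, hb, hc, -⟩)
    · exact hT.of_coincident h
    · by_cases hab : a = b
      · exact hT.of_coincident (.inl hab)
      · exact (hT.mem_iff_of_mem_linesOf hl ha hb hab).1 hc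

/-- The collinearity relation of an encoded linear space. -/
def fullRel (s : Finset ℕ × Finset (Finset ℕ)) : TernaryRel {x // x ∈ s.1} :=
  fun a b c => Coincident a b c ∨ OnFullLine s.2 (a : ℕ) b c

lemma mem_realizations_fullRel {Pt Ln : Type} [Membership Pt Ln]
    [ProjectivePlane Pt Ln] {s : Finset ℕ × Finset (Finset ℕ)} {σ : {x // x ∈ s.1} → Pt} :
    σ ∈ realizations Pt Ln (fullRel s) ↔ IsStrongReal Ln s.1 s.2 σ := by
  rw [mem_realizations_iff .inl]
  refine and_congr_right fun _ => forall₃_congr fun a b c => ?_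
  rw [← and_imp, ← and_imp, and_assoc, ← not_coincident_iff]
  exact forall_congr' fun h => iff_congr (or_iff_right h) Iff.rfl

lemma mem_realizations_coincident {Pt Ln : Type} [Membership Pt Ln]
    [ProjectivePlane Pt Ln] {n : ℕ} {τ : Fin n → Pt} :
    τ ∈ realizations Pt Ln Coincident ↔ IsPlaneArc Ln τ := by
  rw [mem_realizations_iff id]
  refine and_congr_right fun _ => forall₃_congr fun a b c => ?_
  rw [← and_imp, ← and_imp, and_assoc, ← not_coincident_iff]
  exact forall_congr' fun h => iff_false_left h

lemma LSIso.exists_fullRel_eq_comap {s t : Finset ℕ × Finset (Finset ℕ)}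
    (hs : ∀ l ∈ s.2, l ⊆ s.1) (h : LSIso s t) :
    ∃ e : {x // x ∈ s.1} ≃ {x // x ∈ t.1}, fullRel s = (fullRel t).comap e := by
  obtain ⟨e, he, hlines⟩ := h
  let E : {x // x ∈ s.1} ≃ {x // x ∈ t.1} := he.equiv e
  refine ⟨E, ?_⟩
  funext a b c
  have hcoinc : Coincident a b c ↔ Coincident (E a) (E b) (E c) := by
    simp only [Coincident, E.injective.eq_iff]
  have hline : OnFullLine s.2 (a : ℕ) b c ↔ OnFullLine t.2 (E a : ℕ) (E b) (E c) := by
    rw [hlines]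
    exact (onFullLine_image he.injOn (fun l hl => coe_subset.2 (hs l hl)) a.2 b.2 c.2).symm
  exact propext (or_congr hcoinc hline)

/-- The linear space of a collinearity relation, with its points renamed by `f` to natural
numbers. -/
noncomputable def encode [Fintype α] (f : α → ℕ) (T : TernaryRel α) :
    Finset ℕ × Finset (Finset ℕ) :=
  (univ.image f, (linesOf T).image (Finset.image f))

section Encode

variable [Fintype α] {T : TernaryRel α} {f : α → ℕ}

lemma isLinearSpace_encode (hT : IsCollinearity T) (hf : f.Injective) :
    IsLinearSpace (encode f T).1 (encode f T).2 := by
  constructor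
  · refine forall_mem_image.2 fun l hl => ⟨image_subset_image (subset_univ l), ?_⟩
    rw [card_image_of_injective _ hf]
    exact hT.two_le_card_of_mem_linesOf hl
  · refine forall_mem_image.2 fun a _ => forall_mem_image.2 fun b _ hab => ?_
    obtain ⟨l, ⟨hl, ha, hb⟩, hl_unique⟩ := hT.existsUnique_line (ne_of_apply_ne f hab)
    refine ⟨l.image f, ⟨mem_image_of_mem _ hl, mem_image_of_mem f ha, mem_image_of_mem f hb⟩, ?_⟩
    rintro l' ⟨hl', ham, hbm⟩
    obtain ⟨m, hm, rfl⟩ := mem_image.1 hl'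
    rw [hf.mem_finset_image] at ham hbm
    rw [hl_unique m ⟨hm, ham, hbm⟩]

lemma isSuperfiguration_encode (hT : IsCollinearity T) (h : ∀ x, 3 ≤ #(fullLines T x))
    (hf : f.Injective) : IsSuperfiguration (encode f T).1 (encode f T).2 := by
  refine ⟨isLinearSpace_encode hT hf, forall_mem_image.2 fun x _ => (h x).trans ?_⟩
  rw [← card_image_of_injective _ (image_injective hf)]
  refine card_le_card (image_subset_iff.2 fun l hl => ?_)
  obtain ⟨hline, hx, hcard⟩ := mem_fullLines.1 hl
  refine mem_filter.2 ⟨mem_image_of_mem _ hline, mem_image_of_mem f hx, ?_⟩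
  rwa [card_image_of_injective _ hf]

lemma exists_eq_comap_fullRel_encode (hT : IsCollinearity T) (hf : f.Injective) :
    ∃ e : α ≃ {x // x ∈ (encode f T).1}, T = (fullRel (encode f T)).comap e := by
  let e : α ≃ {x // x ∈ (encode f T).1} := Equiv.ofBijective
    (fun a => ⟨f a, mem_image_of_mem f (mem_univ a)⟩)
    ⟨fun a b h => hf congr($h), fun ⟨x, hx⟩ => by
      obtain ⟨a, -, rfl⟩ := mem_image.1 hx
      exact ⟨a, rfl⟩⟩
  refine ⟨e, ?_⟩
  funext a b c
  have hcoinc : Coincident a b c ↔ Coincident (e a) (e b) (e c) := by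
    simp only [Coincident, e.injective.eq_iff]
  have hline : OnFullLine (linesOf T) a b c ↔ OnFullLine (encode f T).2 (e a : ℕ) (e b) (e c) :=
    (onFullLine_image hf.injOn (fun l _ => Set.subset_univ _) trivial trivial trivial).symm
  exact propext (hT.iff_coincident_or_onFullLine.trans (or_congr hcoinc hline))

end Encode

end Superfigurations

section Representatives

variable {s t u : Finset ℕ × Finset (Finset ℕ)}

namespace LSIso

lemma refl (s : Finset ℕ × Finset (Finset ℕ)) : LSIso s s := by
  refine ⟨id, Set.bijOn_id _, ?_⟩
  have : Finset.image (id : ℕ → ℕ) = id := funext fun _ => image_id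
  rw [this, image_id]

lemma trans (hst : LSIso s t) (htu : LSIso t u) : LSIso s u := by
  obtain ⟨e, he, hlines⟩ := hst
  obtain ⟨f, hf, hlines'⟩ := htu
  refine ⟨f ∘ e, hf.comp he, ?_⟩
  rw [hlines', hlines, image_image]
  exact image_congr fun l _ => image_image

lemma symm (hs : ∀ l ∈ s.2, l ⊆ s.1) (hst : LSIso s t) : LSIso t s := by
  obtain ⟨e, he, hlines⟩ := hst
  have hinv := he.invOn_invFunOn
  refine ⟨Function.invFunOn e s.1, hinv.symm.bijOn he.surjOn.mapsTo_invFunOn he.mapsTo, ?_⟩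
  have hline (l) (hl : l ∈ s.2) : (l.image e).image (Function.invFunOn e s.1) = l := by
    rw [image_image]
    exact (image_congr fun x hx => hinv.1 (hs l hl hx)).trans image_id
  rw [hlines, image_image]
  exact image_id.symm.trans (image_congr fun l hl => (hline l hl).symm)

lemma exists_points_eq_range (hs : ∀ l ∈ s.2, l ⊆ s.1) :
    ∃ t, LSIso s t ∧ t ∈ (range #s.1).powerset ×ˢ (range #s.1).powerset.powerset := by
  have hcard : (s.1 : Set ℕ).encard = (range #s.1 : Set ℕ).encard := by
    rw [Set.encard_coe_eq_coe_finsetCard, Set.encard_coe_eq_coe_finsetCard, card_range]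
  obtain ⟨e, he⟩ := s.1.finite_toSet.exists_bijOn_of_encard_eq hcard
  refine ⟨(range #s.1, s.2.image (Finset.image e)), ⟨e, he, rfl⟩, ?_⟩
  refine mem_product.2 ⟨mem_powerset_self _, mem_powerset.2 (image_subset_iff.2 fun l hl => ?_)⟩
  exact mem_powerset.2 (image_subset_iff.2 fun x hx => he.mapsTo (hs l hl hx))

end LSIso

lemma IsSuperfiguration.subset {P : Finset ℕ} {L : Finset (Finset ℕ)} (h : IsSuperfiguration P L) :
    ∀ l ∈ L, l ⊆ P :=
  fun l hl => (h.1.1 l hl).1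

/-- The encoded superfigurations with at most `n` points. -/
def SmallSuperfiguration (n : ℕ) : Type :=
  {s : Finset ℕ × Finset (Finset ℕ) // IsSuperfiguration s.1 s.2 ∧ #s.1 ≤ n}

/-- Isomorphism of superfigurations. -/
instance SmallSuperfiguration.isoSetoid (n : ℕ) : Setoid (SmallSuperfiguration n) where
  r s t := LSIso s.1 t.1
  iseqv := ⟨fun s => .refl s.1, fun {s _} h => h.symm s.2.1.subset, fun h h' => h.trans h'⟩

instance SmallSuperfiguration.finite_quotient (n : ℕ) :
    Finite (Quotient (SmallSuperfiguration.isoSetoid n)) := by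
  have hstd (s : SmallSuperfiguration n) :
      ∃ t : ((range n).powerset ×ˢ (range n).powerset.powerset : Finset _), LSIso s.1 t := by
    obtain ⟨t, hst, ht⟩ := LSIso.exists_points_eq_range s.2.1.subset
    have hrange : (range #s.1.1).powerset ⊆ (range n).powerset :=
      powerset_mono.2 (range_subset_range.2 s.2.2)
    exact ⟨⟨t, product_subset_product hrange (powerset_mono.2 hrange) ht⟩, hst⟩
  choose std hstd using hstd
  refine Finite.of_injective (fun c => std c.out) fun c d hcd => ?_
  have hc : LSIso c.out.1 (std d.out) := (show std c.out = std d.out from hcd) ▸ hstd c.out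
  exact Quotient.out_equiv_out.1 (hc.trans ((hstd d.out).symm d.out.2.1.subset))

lemma exists_superfiguration_representatives (n : ℕ) :
    ∃ R : Finset (Finset ℕ × Finset (Finset ℕ)),
      (∀ s ∈ R, IsSuperfiguration s.1 s.2 ∧ #s.1 ≤ n) ∧
      ∀ P L, IsSuperfiguration P L → #P ≤ n → ∃! t, t ∈ R ∧ LSIso (P, L) t := by
  classical
  have := Fintype.ofFinite (Quotient (SmallSuperfiguration.isoSetoid n))
  refine ⟨univ.image fun c : Quotient (SmallSuperfiguration.isoSetoid n) => c.out.1,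
    forall_mem_image.2 fun c _ => c.out.2, fun P L h hP => ?_⟩
  let s : SmallSuperfiguration n := ⟨(P, L), h, hP⟩
  refine ⟨(⟦s⟧ : Quotient _).out.1, ⟨mem_image_of_mem _ (mem_univ _), ?_⟩, ?_⟩
  · exact Setoid.symm (Quotient.mk_out s)
  · rintro _ ⟨ht, hst⟩
    obtain ⟨c, -, rfl⟩ := mem_image.1 ht
    have hc : ⟦s⟧ = c := (Quotient.sound hst).trans c.out_eq
    rw [hc]

end Representatives

section PolynomialCombinations

/-- A finite projective plane, bundled so that counts become functions on all planes. -/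
structure FinitePlane : Type 1 where
  /-- The points of the plane. -/
  Point : Type
  /-- The lines of the plane. -/
  Line : Type
  [membership : Membership Point Line]
  [finite_point : Finite Point]
  [finite_line : Finite Line]
  [projectivePlane : ProjectivePlane Point Line]

attribute [instance] FinitePlane.membership FinitePlane.finite_point FinitePlane.finite_line
  FinitePlane.projectivePlane

namespace FinitePlane

/-- The order of a bundled plane. -/
noncomputable def order (Q : FinitePlane) : ℕ := ProjectivePlane.order Q.Point Q.Line

/-- Polynomials act on integer-valued functions of a plane through their values at the order. -/
noncomputable instance : Module ℤ[X] (FinitePlane → ℤ) :=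
  .compHom _ (RingHom.pi fun Q : FinitePlane => evalRingHom (Q.order : ℤ))

lemma smul_apply (p : ℤ[X]) (F : FinitePlane → ℤ) (Q : FinitePlane) :
    (p • F) Q = p.eval (Q.order : ℤ) * F Q := rfl

end FinitePlane

/-- The number of realizations of `T`, as a function of the plane. -/
noncomputable def realizationCount {α : Type*} (T : TernaryRel α) : FinitePlane → ℤ :=
  fun Q => (realizations Q.Point Q.Line T).ncard

lemma realizationCount_comap {α β : Type*} (e : α ≃ β) (T : TernaryRel β) :
    realizationCount (T.comap e) = realizationCount T :=
  funext fun _ => congrArg Nat.cast (ncard_realizations_comap e T)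

lemma realizationCount_eq_zero {α : Type*} {T : TernaryRel α} (hT : ¬ IsCollinearity T) :
    realizationCount T = 0 := by
  funext Q
  have : realizations Q.Point Q.Line T = ∅ :=
    Set.eq_empty_of_forall_notMem fun _ hσ => hT (isCollinearity_of_mem_realizations hσ)
  rw [realizationCount, this, Set.ncard_empty, Nat.cast_zero, Pi.zero_apply]

lemma LSIso.realizationCount_fullRel {s t : Finset ℕ × Finset (Finset ℕ)}
    (hs : ∀ l ∈ s.2, l ⊆ s.1) (h : LSIso s t) :
    realizationCount (fullRel s) = realizationCount (fullRel t) := by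
  obtain ⟨e, he⟩ := h.exists_fullRel_eq_comap hs
  rw [he, realizationCount_comap]

lemma exists_smul_realizationCount_eq_sum {α : Type*} [Fintype α] {T : TernaryRel α} {x : α}
    (hT : IsCollinearity T) (hx : #(fullLines T x) ≤ 2) :
    ∃ p : ℤ[X], ∑ U ∈ extensionsAt T x, realizationCount U =
      p • realizationCount (T.delete x) := by
  refine ⟨commonPointsPoly #(fullLines T x) - C ((occupiedPoints T x).ncard : ℤ), ?_⟩
  funext Q
  rw [Finset.sum_apply, FinitePlane.smul_apply]
  refine Eq.trans ?_ (ncard_weakRealizations hT hx)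
  exact (Nat.cast_sum ..).symm.trans (congrArg Nat.cast sum_ncard_realizations_extensionsAt)

/-- The functions of a plane that are combinations of the realization counts of superfigurations
with at most `n` points, with coefficients polynomial in the order. -/
noncomputable def superfigurationSpan (n : ℕ) : Submodule ℤ[X] (FinitePlane → ℤ) :=
  .span ℤ[X] {F | ∃ s : Finset ℕ × Finset (Finset ℕ),
    (IsSuperfiguration s.1 s.2 ∧ #s.1 ≤ n) ∧ realizationCount (fullRel s) = F}

lemma realizationCount_mem_of_three_le_card_fullLines {α : Type*} [Fintype α] {n : ℕ}
    (hn : Fintype.card α ≤ n) {T : TernaryRel α} (hT : IsCollinearity T)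
    (h : ∀ x, 3 ≤ #(fullLines T x)) : realizationCount T ∈ superfigurationSpan n := by
  let f : α ↪ ℕ := (Fintype.equivFin α).toEmbedding.trans Fin.valEmbedding
  obtain ⟨e, he⟩ := exists_eq_comap_fullRel_encode hT f.injective
  refine Submodule.subset_span ⟨encode f T, ⟨isSuperfiguration_encode hT h f.injective,
    card_image_le.trans hn⟩, ?_⟩
  rw [← realizationCount_comap e, ← he]

lemma realizationCount_mem_of_card_fullLines_le_two {α : Type*} [Fintype α] {n : ℕ}
    {T : TernaryRel α} {x : α} (hT : IsCollinearity T) (hx : #(fullLines T x) ≤ 2)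
    (hdelete : realizationCount (T.delete x) ∈ superfigurationSpan n)
    (hgt : ∀ U > T, realizationCount U ∈ superfigurationSpan n) :
    realizationCount T ∈ superfigurationSpan n := by
  classical
  obtain ⟨p, hp⟩ := exists_smul_realizationCount_eq_sum hT hx
  have hself : T ∈ extensionsAt T x := mem_extensionsAt.2 ⟨le_rfl, rfl⟩
  rw [← add_sum_erase _ _ hself] at hp
  rw [eq_sub_of_add_eq hp]
  refine Submodule.sub_mem _ (Submodule.smul_mem _ p hdelete) (Submodule.sum_mem _ fun U hU => ?_)
  obtain ⟨hne, hU⟩ := mem_erase.1 hU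
  exact hgt U ((mem_extensionsAt.1 hU).1.lt_of_ne' hne)

theorem realizationCount_mem_superfigurationSpan {α : Type*} [Fintype α] {n : ℕ}
    (hn : Fintype.card α ≤ n) (T : TernaryRel α) :
    realizationCount T ∈ superfigurationSpan n := by
  induction hk : Fintype.card α using Nat.strong_induction_on generalizing α with
  | _ k ih_card =>
    induction T using WellFoundedGT.induction with
    | _ T ih_gt =>
      by_cases hT : IsCollinearity T
      · by_cases hfull : ∀ x, 3 ≤ #(fullLines T x)
        · exact realizationCount_mem_of_three_le_card_fullLines hn hT hfull
        · obtain ⟨x, hx⟩ := not_forall.1 hfull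
          classical
          have hlt : Fintype.card {y // y ≠ x} < Fintype.card α :=
            Fintype.card_subtype_lt (x := x) (not_not.2 rfl)
          exact realizationCount_mem_of_card_fullLines_le_two hT (by omega)
            (ih_card _ (hk ▸ hlt) (hlt.le.trans hn) _ rfl) ih_gt
      · rw [realizationCount_eq_zero hT]
        exact Submodule.zero_mem _

lemma superfigurationSpan_le {n : ℕ} {R : Finset (Finset ℕ × Finset (Finset ℕ))}
    (hR : ∀ P L, IsSuperfiguration P L → #P ≤ n → ∃! t, t ∈ R ∧ LSIso (P, L) t) :
    superfigurationSpan n ≤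
      .span ℤ[X] ((fun s => realizationCount (fullRel s)) '' R) := by
  refine Submodule.span_le.2 ?_
  rintro _ ⟨s, ⟨hs, hcard⟩, rfl⟩
  obtain ⟨t, ⟨ht, hst⟩, -⟩ := hR s.1 s.2 hs hcard
  exact Submodule.subset_span ⟨t, ht, (hst.realizationCount_fullRel hs.subset).symm⟩

end PolynomialCombinations

/-- Glynn's theorem: for every `n ≥ 1` there are integer polynomials `p` and `p_s`, one for
each isomorphism class of superfigurations on at most `n` points (encoded by a finite set
`R` of representatives, one per isomorphism class, with coefficient polynomials `coef`),
such that for every finite projective plane `Π` of order `q` (every line has `q + 1`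
points), `C_n(Π) = p(q) + ∑_s p_s(q) · A_s(Π)`. -/
theorem glynn (n : ℕ) (hn : 1 ≤ n) :
    ∃ (p : Polynomial ℤ) (R : Finset (Finset ℕ × Finset (Finset ℕ)))
      (coef : Finset ℕ × Finset (Finset ℕ) → Polynomial ℤ),
      (∀ s ∈ R, IsSuperfiguration s.1 s.2 ∧ s.1.card ≤ n) ∧
      (∀ P L, IsSuperfiguration P L → P.card ≤ n → ∃! t, t ∈ R ∧ LSIso (P, L) t) ∧
      ∀ (q : ℕ) (Pt Ln : Type) [Membership Pt Ln] [Finite Pt] [Finite Ln]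
        [Configuration.ProjectivePlane Pt Ln],
        (∀ l : Ln, Nat.card {x : Pt // x ∈ l} = q + 1) →
        (Nat.card {τ : Fin n → Pt // IsPlaneArc Ln τ} : ℤ) =
          p.eval (q : ℤ) +
            ∑ s ∈ R, (coef s).eval (q : ℤ) *
              (Nat.card {σ : {x // x ∈ s.1} → Pt // IsStrongReal Ln s.1 s.2 σ} : ℤ) := by
  obtain ⟨R, hR, hR_unique⟩ := exists_superfiguration_representatives n
  have hmem : realizationCount (Coincident : TernaryRel (Fin n)) ∈
      Submodule.span ℤ[X] ((fun s => realizationCount (fullRel s)) '' R) :=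
    superfigurationSpan_le hR_unique
      (realizationCount_mem_superfigurationSpan (Fintype.card_fin n).le _)
  obtain ⟨coef, hcoef⟩ := Submodule.mem_span_image_finset_iff_exists_fun' ℤ[X] |>.1 hmem
  -- The empty superfiguration has exactly one realization, so its term plays the role of `p`.
  refine ⟨0, R, coef, hR, hR_unique, fun q Pt Ln _ _ _ _ hq => ?_⟩
  simp only [← mem_realizations_coincident, ← mem_realizations_fullRel, eval_zero, zero_add,
    ← order_eq_of_ncard_line hq]
  have hcount := congrFun hcoef.symm ⟨Pt, Ln⟩
  rwa [Finset.sum_apply] at hcount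
end

section
/- For every integer n ≥ 1 there exist a polynomial p(q) with integer coefficients and polynomials p_h(q) with integer coefficients, one for each isomorphism class h of hyperfigurations on at most n points, such that for every prime power q, C_{n,4}(q) = p(q) + Σ_h p_h(q) · A_h(4,q), where the sum runs over all isomorphism classes h of hyperfigurations on at most n points. -/
open scoped LinearAlgebra.Projectivization

/-- A planar space, encoded by its point set `P` (a finite set of natural numbers), its set
`L` of lines and its set `H` of planes: lines and planes are subsets of `P`, `(P, L)` is a
linear space (every line has at least 2 points and any two distinct points lie on exactly
one line), and any three distinct non-collinear points lie on a unique plane. -/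
def IsPlanarSpace (P : Finset ℕ) (L H : Finset (Finset ℕ)) : Prop :=
  (∀ l ∈ L, l ⊆ P ∧ 2 ≤ l.card) ∧
  (∀ h ∈ H, h ⊆ P) ∧
  (∀ a ∈ P, ∀ b ∈ P, a ≠ b → ∃! l, l ∈ L ∧ a ∈ l ∧ b ∈ l) ∧
  (∀ a ∈ P, ∀ b ∈ P, ∀ c ∈ P, a ≠ b → a ≠ c → b ≠ c →
    (¬ ∃ l ∈ L, a ∈ l ∧ b ∈ l ∧ c ∈ l) → ∃! h, h ∈ H ∧ a ∈ h ∧ b ∈ h ∧ c ∈ h)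

/-- The number of full planes (planes with at least 4 points) through a point. -/
def planeIndex (H : Finset (Finset ℕ)) (p : ℕ) : ℕ :=
  (H.filter fun h => p ∈ h ∧ 4 ≤ h.card).card

/-- The number of full lines (lines with at least 3 points) through a point. -/
def lineIndex (L : Finset (Finset ℕ)) (p : ℕ) : ℕ :=
  (L.filter fun l => p ∈ l ∧ 3 ≤ l.card).card

/-- A hyperfiguration: a planar space in which the index `(i, j)` of every point (where `i`
is the number of full planes and `j` the number of full lines through the point) satisfies
`i ≥ 4`, or `j ≥ 3`, or `(i, j) = (3, 0)`. -/
def IsHyperfiguration (P : Finset ℕ) (L H : Finset (Finset ℕ)) : Prop :=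
  IsPlanarSpace P L H ∧
    ∀ p ∈ P, 4 ≤ planeIndex H p ∨ 3 ≤ lineIndex L p ∨
      (planeIndex H p = 3 ∧ lineIndex L p = 0)

/-- Two planar spaces (given as triples of a point set, a line set and a plane set) are
isomorphic if there is a bijection of their point sets carrying lines to lines and planes
to planes. -/
def PSIso (s t : Finset ℕ × Finset (Finset ℕ) × Finset (Finset ℕ)) : Prop :=
  ∃ e : ℕ → ℕ, Set.BijOn e ↑s.1 ↑t.1 ∧ t.2.1 = s.2.1.image (Finset.image e) ∧
    t.2.2 = s.2.2.image (Finset.image e)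

/-- The span in `F^4` of the images under `σ` of the points of `Q`. -/
noncomputable def spanOf {F : Type} [Field F] {P : Finset ℕ}
    (σ : {x // x ∈ P} → ℙ F (Fin 4 → F)) (Q : Finset ℕ) : Submodule F (Fin 4 → F) :=
  ⨆ x : {x // x ∈ P}, ⨆ _ : (↑x ∈ Q), (σ x).submodule

/-- A strong realization of a planar space `(P, L, H)` in `ℙ³(F_q)`: an injective map
`σ : P → ℙ³(F_q)` such that a subset `Q ⊆ P` is contained in a line of the planar space iff
`σ(Q)` is contained in a line of `ℙ³(F_q)` (its representatives span a subspace of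
dimension at most 2), and `Q` is contained in a plane of the planar space iff `σ(Q)` is
contained in a plane of `ℙ³(F_q)` (its representatives span a subspace of dimension at
most 3). -/
def IsStrongReal3 (F : Type) [Field F] (P : Finset ℕ) (L H : Finset (Finset ℕ))
    (σ : {x // x ∈ P} → ℙ F (Fin 4 → F)) : Prop :=
  Function.Injective σ ∧
    ∀ Q : Finset ℕ, Q ⊆ P →
      ((∃ l ∈ L, Q ⊆ l) ↔ Module.finrank F (spanOf σ Q) ≤ 2) ∧
      ((∃ h ∈ H, Q ⊆ h) ↔ Module.finrank F (spanOf σ Q) ≤ 3)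

/-- Four points of `ℙ³(F_q)` are coplanar if vector representatives of them span a subspace
of `F_q^4` of dimension at most 3. -/
def Coplanar4 (F : Type) [Field F] (x y z w : ℙ F (Fin 4 → F)) : Prop :=
  Module.finrank F ↥(x.submodule ⊔ y.submodule ⊔ z.submodule ⊔ w.submodule) ≤ 3

/-- An ordered `n`-arc in `ℙ³(F_q)`. -/
def IsArc4 (F : Type) [Field F] {n : ℕ} (σ : Fin n → ℙ F (Fin 4 → F)) : Prop :=
  Function.Injective σ ∧
    ∀ a b c d : Fin n, a ≠ b → a ≠ c → a ≠ d → b ≠ c → b ≠ d → c ≠ d →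
      ¬ Coplanar4 F (σ a) (σ b) (σ c) (σ d)

/-!
Configurations of labelled points are counted one rank function at a time: the rank function of a
configuration in `ℙ³(F)` assigns to every set of labels the dimension of the span of its points. By
induction on the number of points and on the rank function, each of these counts is a combination of
`1` and of counts of strong realizations of hyperfigurations, with coefficients polynomial in `q`.

Consider the subspaces that are spanned by other points and pass through the point with a given
label. If each of them contains one of at most two among them, then the locus in which the point may
be moved without losing an incidence is the intersection of these two, so its dimension can be read
off from the rank function. Removing the point then expresses the count through one for fewer points
and, since incidences may be gained, through counts for smaller rank functions. If this fails for
every label, linear geometry in rank at most four shows that every point has the index required in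
a hyperfiguration, whose strong realizations are exactly the configurations with the given rank
function.
-/

open Module Polynomial

/-! ### Spans and ranks of labelled points -/

section PointSpan

variable {F V ι κ : Type*} [DivisionRing F] [AddCommGroup V] [Module F V]

/-- The span of the points of a labelled configuration `σ` whose labels lie in `Q`; this is the
general form of `spanOf`. -/
def pointSpan (σ : ι → ℙ F V) (Q : Set ι) : Submodule F V :=
  ⨆ i ∈ Q, (σ i).submodule

/-- The flat of labels of the points of `σ` that lie in the subspace `U`. -/
def flat (σ : ι → ℙ F V) (U : Submodule F V) : Set ι :=
  {i | (σ i).submodule ≤ U}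

/-- The rank function of a configuration. It records all incidences between the points, and is
the invariant by which configurations over different fields are compared. -/
noncomputable def pointRank (σ : ι → ℙ F V) (Q : Set ι) : ℕ :=
  finrank F (pointSpan σ Q)

variable (σ : ι → ℙ F V)

lemma gc_pointSpan_flat : GaloisConnection (pointSpan σ) (flat σ) := fun _ _ => by
  simp only [pointSpan, iSup_le_iff, flat, Set.subset_def, Set.mem_ofPred_eq]

lemma submodule_le_pointSpan {Q : Set ι} {i : ι} (hi : i ∈ Q) :
    (σ i).submodule ≤ pointSpan σ Q :=
  (gc_pointSpan_flat σ).le_u_l Q hi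

lemma pointSpan_union (Q Q' : Set ι) : pointSpan σ (Q ∪ Q') = pointSpan σ Q ⊔ pointSpan σ Q' :=
  (gc_pointSpan_flat σ).l_sup

lemma pointSpan_singleton (i : ι) : pointSpan σ {i} = (σ i).submodule :=
  iSup_singleton

lemma pointSpan_insert (i : ι) (Q : Set ι) :
    pointSpan σ (insert i Q) = (σ i).submodule ⊔ pointSpan σ Q :=
  iSup_insert

lemma pointSpan_comp (f : κ → ι) (Q : Set κ) : pointSpan (σ ∘ f) Q = pointSpan σ (f '' Q) := by
  simp only [pointSpan, iSup_image, Function.comp_apply]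

lemma pointRank_comp (f : κ → ι) (Q : Set κ) : pointRank (σ ∘ f) Q = pointRank σ (f '' Q) := by
  rw [pointRank, pointRank, pointSpan_comp]

lemma submodule_le_submodule_iff {x y : ℙ F V} : x.submodule ≤ y.submodule ↔ x = y := by
  refine ⟨fun h => Projectivization.submodule_injective ?_, fun h => h ▸ le_rfl⟩
  exact Submodule.eq_of_le_of_finrank_eq h (by simp only [Projectivization.finrank_submodule])

lemma finrank_sup_eq_right_iff [FiniteDimensional F V] {U W : Submodule F V} :
    finrank F ↥(U ⊔ W) = finrank F W ↔ U ≤ W :=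
  ⟨fun h => sup_eq_right.1 (Submodule.eq_of_le_of_finrank_eq le_sup_right h.symm).symm,
    fun h => by rw [sup_eq_right.2 h]⟩

lemma finrank_submodule_sup_le [FiniteDimensional F V] (x : ℙ F V) (U : Submodule F V) :
    finrank F ↥(x.submodule ⊔ U) ≤ finrank F U + 1 := by
  have h := Submodule.finrank_add_le_finrank_add_finrank x.submodule U
  rwa [x.finrank_submodule, add_comm] at h

lemma finrank_submodule_sup_of_not_le [FiniteDimensional F V] {x : ℙ F V} {U : Submodule F V}
    (hx : ¬ x.submodule ≤ U) : finrank F ↥(x.submodule ⊔ U) = finrank F U + 1 :=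
  (finrank_submodule_sup_le x U).antisymm (Submodule.finrank_lt_finrank_of_lt (right_lt_sup.2 hx))

lemma pointRank_mono [FiniteDimensional F V] : Monotone (pointRank σ) := fun _ _ h =>
  Submodule.finrank_mono ((gc_pointSpan_flat σ).monotone_l h)

lemma pointRank_le_finrank [FiniteDimensional F V] (Q : Set ι) : pointRank σ Q ≤ finrank F V :=
  Submodule.finrank_le _

lemma pointRank_union_add_finrank_inf [FiniteDimensional F V] (Q Q' : Set ι) :
    pointRank σ (Q ∪ Q') + finrank F ↥(pointSpan σ Q ⊓ pointSpan σ Q') =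
      pointRank σ Q + pointRank σ Q' := by
  rw [pointRank, pointSpan_union]
  exact Submodule.finrank_sup_add_finrank_inf_eq _ _

lemma pointSpan_le_pointSpan_iff [FiniteDimensional F V] {Q Q' : Set ι} :
    pointSpan σ Q ≤ pointSpan σ Q' ↔ pointRank σ (Q ∪ Q') = pointRank σ Q' := by
  rw [← finrank_sup_eq_right_iff, ← pointSpan_union, pointRank, pointRank]

lemma submodule_le_pointSpan_iff [FiniteDimensional F V] {i : ι} {Q : Set ι} :
    (σ i).submodule ≤ pointSpan σ Q ↔ pointRank σ (insert i Q) = pointRank σ Q := by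
  rw [← finrank_sup_eq_right_iff, ← pointSpan_insert, pointRank, pointRank]

lemma pointRank_insert_le [FiniteDimensional F V] (i : ι) (Q : Set ι) :
    pointRank σ (insert i Q) ≤ pointRank σ Q + 1 := by
  rw [pointRank, pointSpan_insert]
  exact finrank_submodule_sup_le _ _

lemma pointRank_insert_of_not_le [FiniteDimensional F V] {i : ι} {Q : Set ι}
    (hi : ¬ (σ i).submodule ≤ pointSpan σ Q) : pointRank σ (insert i Q) = pointRank σ Q + 1 := by
  rw [pointRank, pointSpan_insert, finrank_submodule_sup_of_not_le hi, pointRank]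

lemma pointRank_empty : pointRank σ ∅ = 0 := by
  rw [pointRank, show pointSpan σ ∅ = ⊥ from iSup_emptyset, finrank_bot]

lemma pointRank_le_ncard [FiniteDimensional F V] {Q : Set ι} (hQ : Q.Finite) :
    pointRank σ Q ≤ Q.ncard := by
  induction Q, hQ using Set.Finite.induction_on with
  | empty => rw [pointRank_empty, Set.ncard_empty]
  | insert hi hQ ih =>
    rw [Set.ncard_insert_of_notMem hi hQ]
    exact (pointRank_insert_le σ _ _).trans (Nat.succ_le_succ ih)

lemma pointRank_singleton (i : ι) : pointRank σ {i} = 1 := by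
  rw [pointRank, pointSpan_singleton, Projectivization.finrank_submodule]

lemma pointRank_pair_eq_one_iff [FiniteDimensional F V] {i j : ι} :
    pointRank σ {i, j} = 1 ↔ σ i = σ j := by
  rw [← submodule_le_submodule_iff, ← pointSpan_singleton σ j, submodule_le_pointSpan_iff,
    pointRank_singleton]

lemma injective_iff_pointRank [FiniteDimensional F V] :
    Function.Injective σ ↔ ∀ i j, pointRank σ {i, j} = 1 → i = j := by
  simp only [pointRank_pair_eq_one_iff, Function.Injective]

variable {σ}

lemma pointRank_pair [FiniteDimensional F V] (hσ : Function.Injective σ) {i j : ι} (hij : i ≠ j) :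
    pointRank σ {i, j} = 2 := by
  rw [pointRank_insert_of_not_le, pointRank_singleton]
  rw [pointSpan_singleton, submodule_le_submodule_iff]
  exact hσ.ne hij

lemma pointRank_eq_zero_iff [FiniteDimensional F V] {Q : Set ι} : pointRank σ Q = 0 ↔ Q = ∅ := by
  refine ⟨fun h => Set.eq_empty_of_forall_notMem fun i hi => ?_, fun h => h ▸ pointRank_empty σ⟩
  have hle := pointRank_mono σ (Set.singleton_subset_iff.2 hi)
  rw [pointRank_singleton, h] at hle
  exact absurd hle (by decide)

lemma pointRank_le_one_iff [FiniteDimensional F V] (hσ : Function.Injective σ) {Q : Set ι} :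
    pointRank σ Q ≤ 1 ↔ Q.Subsingleton := by
  refine ⟨fun h i hi j hj => by_contra fun hij => ?_, fun h => ?_⟩
  · have hle := pointRank_mono σ (Set.pair_subset hi hj)
    rw [pointRank_pair hσ hij] at hle
    exact absurd (hle.trans h) (by decide)
  · exact (pointRank_le_ncard σ h.finite).trans ((Set.ncard_le_one h.finite).2 h)

end PointSpan

lemma card_submodule_le {F V : Type*} [Field F] [Finite F] [AddCommGroup V] [Module F V]
    (U : Submodule F V) :
    Nat.card {x : ℙ F V // x.submodule ≤ U} =
      ∑ k ∈ Finset.range (finrank F U), Nat.card F ^ k := by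
  have hrange : Set.range (Projectivization.map U.subtype U.injective_subtype) =
      {x : ℙ F V | x.submodule ≤ U} := by
    ext x
    constructor
    · rintro ⟨y, rfl⟩
      induction y using Projectivization.ind with
      | h v hv => exact (Submodule.span_singleton_le_iff_mem _ _).2 v.2
    · induction x using Projectivization.ind with
      | h v hv =>
        intro hx
        have hvU : v ∈ U := (Submodule.span_singleton_le_iff_mem _ _).1 hx
        exact ⟨Projectivization.mk F ⟨v, hvU⟩ (Subtype.coe_ne_coe.1 hv), rfl⟩
  rw [← Projectivization.card_of_finrank F U rfl,
    ← Nat.card_range_of_injective (Projectivization.map_injective U.subtype U.injective_subtype),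
    hrange, Set.coe_ofPred]

/-! ### Adding a point to a configuration -/

section Deletion

variable {F E V W ι : Type*} [DivisionRing F] [AddCommGroup V] [Module F V]
  [DivisionRing E] [AddCommGroup W] [Module E W]

/-- The configuration `σ` with the point labelled `p` removed. -/
abbrev deletion {α : Type*} (σ : ι → α) (p : ι) : {i // i ≠ p} → α :=
  σ ∘ Subtype.val

/-- The subspaces spanned by points of `τ` that pass through the point `x`. -/
def constraints (τ : ι → ℙ F V) (x : ℙ F V) : Set (Submodule F V) :=
  {U | U ∈ Set.range (pointSpan τ) ∧ x.submodule ≤ U}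

/-- The subspace to which a new point added to `σ` is confined if it has to satisfy every
incidence that `x` satisfies with respect to `τ`. Usually `σ` and `τ` have the same rank function,
but they may live over different fields. -/
def locus (τ : ι → ℙ F V) (x : ℙ F V) (σ : ι → ℙ E W) : Submodule E W :=
  ⨅ Q, ⨅ _ : x.submodule ≤ pointSpan τ Q, pointSpan σ Q

/-- A set of subspaces is dominated if it is empty or if each of its members contains one of two
distinguished members (which may coincide). -/
def IsDominated (K : Set (Submodule F V)) : Prop :=
  K = ∅ ∨ ∃ U₁ ∈ K, ∃ U₂ ∈ K, ∀ U ∈ K, U₁ ≤ U ∨ U₂ ≤ U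

lemma le_locus_iff {τ : ι → ℙ F V} {x : ℙ F V} {σ : ι → ℙ E W} {U : Submodule E W} :
    U ≤ locus τ x σ ↔ ∀ Q, x.submodule ≤ pointSpan τ Q → U ≤ pointSpan σ Q := by
  simp only [locus, le_iInf_iff]

lemma locus_eq_top {τ : ι → ℙ F V} {x : ℙ F V} {σ : ι → ℙ E W} (h : constraints τ x = ∅) :
    locus τ x σ = ⊤ :=
  top_le_iff.1 (le_locus_iff.2 fun Q hQ =>
    (h.subset (⟨⟨Q, rfl⟩, hQ⟩ : pointSpan τ Q ∈ constraints τ x)).elim)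

lemma image_val_preimage_val_ne (p : ι) (A : Set ι) :
    (Subtype.val '' (Subtype.val ⁻¹' A : Set {i // i ≠ p})) = A \ {p} := by
  ext i
  simp [and_comm]

lemma pointRank_deletion_eq_iff {σ : ι → ℙ E W} {τ : ι → ℙ F V} {p : ι} :
    pointRank (deletion σ p) = pointRank (deletion τ p) ↔
      ∀ A, p ∉ A → pointRank σ A = pointRank τ A := by
  simp only [funext_iff, pointRank_comp]
  refine ⟨fun h A hA => ?_, fun h Q => h _ ?_⟩
  · simpa only [image_val_preimage_val_ne, Set.sdiff_singleton_eq_self hA] using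
      h (Subtype.val ⁻¹' A)
  · rintro ⟨i, -, hi⟩
    exact i.2 hi

variable [FiniteDimensional F V] [FiniteDimensional E W]

lemma pointSpan_le_pointSpan_congr {σ : ι → ℙ E W} {τ : ι → ℙ F V}
    (h : pointRank σ = pointRank τ) (Q Q' : Set ι) :
    pointSpan σ Q ≤ pointSpan σ Q' ↔ pointSpan τ Q ≤ pointSpan τ Q' := by
  rw [pointSpan_le_pointSpan_iff, pointSpan_le_pointSpan_iff, h]

lemma pointRank_insert_le_iff {σ : ι → ℙ E W} {τ : ι → ℙ F V} {p : ι} {Q : Set ι}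
    (h : pointRank σ Q = pointRank τ Q) :
    pointRank σ (insert p Q) ≤ pointRank τ (insert p Q) ↔
      ((τ p).submodule ≤ pointSpan τ Q → (σ p).submodule ≤ pointSpan σ Q) := by
  by_cases hτ : (τ p).submodule ≤ pointSpan τ Q
  · simp only [hτ, true_imp_iff, submodule_le_pointSpan_iff]
    rw [(submodule_le_pointSpan_iff τ).1 hτ, ← h]
    exact ⟨fun hle => hle.antisymm (pointRank_mono σ (Set.subset_insert _ _)), Eq.le⟩
  · simp only [hτ, false_imp_iff, iff_true]
    calc pointRank σ (insert p Q) ≤ pointRank σ Q + 1 := pointRank_insert_le σ p Q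
      _ = pointRank τ (insert p Q) := by rw [h, pointRank_insert_of_not_le τ hτ]

lemma pointRank_le_iff_submodule_le_locus {σ : ι → ℙ E W} {τ : ι → ℙ F V} {p : ι}
    (h : pointRank (deletion σ p) = pointRank (deletion τ p)) :
    pointRank σ ≤ pointRank τ ↔
      (σ p).submodule ≤ locus (deletion τ p) (τ p) (deletion σ p) := by
  have hoff := pointRank_deletion_eq_iff.1 h
  have hins (A : Set ι) : pointRank σ (insert p (A \ {p})) ≤ pointRank τ (insert p (A \ {p})) ↔ _ :=
    pointRank_insert_le_iff (hoff (A \ {p}) fun hp => hp.2 rfl)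
  simp only [le_locus_iff, pointSpan_comp]
  refine ⟨fun hle Q => ?_, fun hloc A => ?_⟩
  · have hQ : Subtype.val '' Q \ {p} = Subtype.val '' Q := Set.sdiff_singleton_eq_self (by simp)
    rw [← hQ]
    exact (hins _).1 (hle _)
  · by_cases hp : p ∈ A
    · rw [← Set.insert_sdiff_self_of_mem hp, hins, ← image_val_preimage_val_ne]
      exact hloc _
    · exact (hoff A hp).le

lemma locus_eq_inf {τ : ι → ℙ F V} {x : ℙ F V} {σ : ι → ℙ E W}
    (h : pointRank σ = pointRank τ) {Q₁ Q₂ : Set ι} (h₁ : x.submodule ≤ pointSpan τ Q₁)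
    (h₂ : x.submodule ≤ pointSpan τ Q₂)
    (hdom : ∀ U ∈ constraints τ x, pointSpan τ Q₁ ≤ U ∨ pointSpan τ Q₂ ≤ U) :
    locus τ x σ = pointSpan σ Q₁ ⊓ pointSpan σ Q₂ := by
  refine le_antisymm (le_inf (le_locus_iff.1 le_rfl Q₁ h₁) (le_locus_iff.1 le_rfl Q₂ h₂))
    (le_locus_iff.2 fun Q hQ => ?_)
  refine (hdom _ ⟨⟨Q, rfl⟩, hQ⟩).elim (fun hle => inf_le_left.trans ?_)
    (fun hle => inf_le_right.trans ?_)
  all_goals exact (pointSpan_le_pointSpan_congr h _ _).2 hle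

lemma finrank_locus_eq (hVW : finrank E W = finrank F V) {τ : ι → ℙ F V} {x : ℙ F V}
    {σ : ι → ℙ E W} (h : pointRank σ = pointRank τ) (hdom : IsDominated (constraints τ x)) :
    finrank E (locus τ x σ) = finrank F (locus τ x τ) := by
  rcases hdom with hempty | ⟨_, ⟨⟨Q₁, rfl⟩, h₁⟩, _, ⟨⟨Q₂, rfl⟩, h₂⟩, hdom⟩
  · rw [locus_eq_top hempty, locus_eq_top hempty, finrank_top, finrank_top, hVW]
  · rw [locus_eq_inf h h₁ h₂ hdom, locus_eq_inf rfl h₁ h₂ hdom]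
    have hσ := pointRank_union_add_finrank_inf σ Q₁ Q₂
    rw [h, ← pointRank_union_add_finrank_inf τ Q₁ Q₂] at hσ
    exact Nat.add_left_cancel hσ

end Deletion

/-! ### Counting configurations -/

/-- A finite field, bundled so that counting functions can be regarded as functions of the
field. -/
structure FinField where
  carrier : Type
  [field : Field carrier]
  [finite : Finite carrier]

namespace FinField

instance : CoeSort FinField Type := ⟨carrier⟩

attribute [instance] field finite

/-- A polynomial acts through its values at the orders of the fields, so that the powers of `X`
play the role of the powers of `q`. -/
noncomputable instance : Algebra ℤ[X] (FinField → ℤ) :=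
  RingHom.toAlgebra (RingHom.pi fun F => evalRingHom (Nat.card F : ℤ))

lemma smul_apply (p : ℤ[X]) (f : FinField → ℤ) (F : FinField) :
    (p • f) F = p.eval (Nat.card F : ℤ) * f F :=
  rfl

end FinField

/-- The number of configurations in `ℙ^(d-1)(F)` with rank function `r`, as a function of the
finite field `F`. -/
noncomputable def configCount {ι : Type*} (d : ℕ) (r : Set ι → ℕ) : FinField → ℤ := fun F =>
  Nat.card {σ : ι → ℙ F (Fin d → F) // pointRank σ = r}

lemma natCard_subtype_mem_eq_sum {α β : Type*} [Finite α] (f : α → β) (T : Finset β) :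
    Nat.card {a // f a ∈ T} = ∑ b ∈ T, Nat.card {a // f a = b} := by
  classical
  have := Fintype.ofFinite α
  simp only [Nat.card_eq_fintype_card, Fintype.card_subtype]
  rw [Finset.card_eq_sum_card_fiberwise (f := f) (t := T)
    (Finset.coe_filter_univ (p := fun a => f a ∈ T)).subset]
  refine Finset.sum_congr rfl fun b hb => congrArg Finset.card ?_
  ext a
  simp only [Finset.mem_filter, Finset.mem_univ, true_and, and_iff_right_iff_imp]
  exact fun hab => hab ▸ hb

lemma natCard_deletion_mul {ι X : Type*} [Finite ι] [Finite X] (p : ι)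
    (S : ({i // i ≠ p} → X) → Prop) (C : ({i // i ≠ p} → X) → X → Prop) {N : ℕ}
    (hN : ∀ σ, S σ → Nat.card {x // C σ x} = N) :
    Nat.card {σ : ι → X // S (deletion σ p) ∧ C (deletion σ p) (σ p)} =
      Nat.card {σ // S σ} * N := by
  classical
  have := Fintype.ofFinite {σ // S σ}
  let split : {σ : ι → X // S (deletion σ p) ∧ C (deletion σ p) (σ p)} ≃
      {y : X × ({i // i ≠ p} → X) // S y.2 ∧ C y.2 y.1} :=
    (Equiv.funSplitAt p X).subtypeEquiv fun _ => Iff.rfl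
  let assoc : {y : X × ({i // i ≠ p} → X) // S y.2 ∧ C y.2 y.1} ≃
      Σ σ : {σ // S σ}, {x // C σ x} :=
    ⟨fun y => ⟨⟨y.1.2, y.2.1⟩, y.1.1, y.2.2⟩, fun s => ⟨(s.2.1, s.1.1), s.1.2, s.2.2⟩,
      fun _ => rfl, fun _ => rfl⟩
  rw [Nat.card_congr (split.trans assoc), Nat.card_sigma,
    Finset.sum_congr rfl fun σ _ => hN σ.1 σ.2, Finset.sum_const, Finset.card_univ,
    Nat.card_eq_fintype_card, smul_eq_mul]

section ConfigCount

variable {ι κ : Type*} {d : ℕ}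

lemma configCount_comp_image (e : κ ≃ ι) (r : Set ι → ℕ) :
    configCount d (fun Q => r (e '' Q)) = configCount d r := by
  funext F
  refine congrArg Nat.cast (Nat.card_congr ?_).symm
  refine (e.arrowCongr (Equiv.refl _)).symm.subtypeEquiv fun σ => ?_
  have himage : Function.Surjective fun Q : Set κ => e '' Q := fun A =>
    ⟨e.symm '' A, e.image_symm_image A⟩
  rw [← himage.injective_comp_right.eq_iff]
  simp only [funext_iff, Function.comp_apply]
  exact forall_congr' fun Q => by rw [← pointRank_comp]; rfl

lemma configCount_eq_zero {r : Set ι → ℕ}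
    (h : ∀ (F : FinField) (σ : ι → ℙ F (Fin d → F)), pointRank σ ≠ r) : configCount d r = 0 := by
  funext F
  have : IsEmpty {σ : ι → ℙ F (Fin d → F) // pointRank σ = r} := ⟨fun σ => h F σ σ.2⟩
  rw [configCount, Nat.card_of_isEmpty, Nat.cast_zero, Pi.zero_apply]

variable [Finite ι]

lemma natCard_pointRank_mem (F : FinField) (T : Finset (Set ι → ℕ)) :
    (Nat.card {σ : ι → ℙ F (Fin d → F) // pointRank σ ∈ T} : ℤ) =
      (∑ r ∈ T, configCount d r) F := by
  rw [natCard_subtype_mem_eq_sum, Nat.cast_sum, Finset.sum_apply]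
  rfl

variable {E : Type*} [DivisionRing E]

lemma sum_configCount_eq_smul {τ : ι → ℙ E (Fin d → E)} {p : ι}
    (hdom : IsDominated (constraints (deletion τ p) (τ p))) {T : Finset (Set ι → ℕ)}
    (hT : ∀ r, r ∈ T ↔ (∀ A, p ∉ A → r A = pointRank τ A) ∧ r ≤ pointRank τ) :
    ∑ r ∈ T, configCount d r =
      (∑ k ∈ Finset.range (finrank E (locus (deletion τ p) (τ p) (deletion τ p))), X ^ k : ℤ[X]) •
        configCount d (pointRank (deletion τ p)) := by
  funext F
  have hN (σ : {i // i ≠ p} → ℙ F (Fin d → F)) (hσ : pointRank σ = pointRank (deletion τ p)) :=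
    calc Nat.card {x : ℙ F (Fin d → F) // x.submodule ≤ locus (deletion τ p) (τ p) σ}
        = ∑ k ∈ Finset.range (finrank F (locus (deletion τ p) (τ p) σ)), Nat.card F ^ k :=
          card_submodule_le _
      _ = ∑ k ∈ Finset.range (finrank E (locus (deletion τ p) (τ p) (deletion τ p))),
            Nat.card F ^ k := by
          rw [finrank_locus_eq (by rw [finrank_fin_fun, finrank_fin_fun]) hσ hdom]
  have hmem (σ : ι → ℙ F (Fin d → F)) : pointRank σ ∈ T ↔
      pointRank (deletion σ p) = pointRank (deletion τ p) ∧
        (σ p).submodule ≤ locus (deletion τ p) (τ p) (deletion σ p) := by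
    rw [hT, ← pointRank_deletion_eq_iff, and_congr_right pointRank_le_iff_submodule_le_locus]
  rw [← natCard_pointRank_mem, Nat.card_congr (Equiv.subtypeEquivRight hmem),
    natCard_deletion_mul p _ _ hN, FinField.smul_apply, eval_finsetSum, mul_comm]
  simp only [eval_pow, eval_X, Nat.cast_mul, Nat.cast_sum, Nat.cast_pow]
  rfl

lemma configCount_mem_of_isDominated {N : Submodule ℤ[X] (FinField → ℤ)}
    {τ : ι → ℙ E (Fin d → E)} {p : ι}
    (hdom : IsDominated (constraints (deletion τ p) (τ p)))
    (hdel : configCount d (pointRank (deletion τ p)) ∈ N)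
    (hlt : ∀ r < pointRank τ, configCount d r ∈ N) :
    configCount d (pointRank τ) ∈ N := by
  classical
  have := Fintype.ofFinite ι
  set T := {r ∈ Finset.Iic (pointRank τ) | ∀ A, p ∉ A → r A = pointRank τ A} with hTdef
  have hT (r : Set ι → ℕ) : r ∈ T ↔ (∀ A, p ∉ A → r A = pointRank τ A) ∧ r ≤ pointRank τ := by
    rw [hTdef, Finset.mem_filter, Finset.mem_Iic, and_comm]
  have hsum := sum_configCount_eq_smul hdom hT
  rw [← Finset.add_sum_erase T _ ((hT _).2 ⟨fun _ _ => rfl, le_rfl⟩)] at hsum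
  rw [eq_sub_of_add_eq hsum]
  refine N.sub_mem (N.smul_mem _ hdel) (N.sum_mem fun r hr => hlt r ?_)
  obtain ⟨hne, hr⟩ := Finset.mem_erase.1 hr
  exact ((hT r).1 hr).2.lt_of_ne hne

end ConfigCount

/-! ### Undominated constraints in rank at most four -/

section Undominated

variable {F V ι : Type*} [DivisionRing F] [AddCommGroup V] [Module F V]
  {τ : ι → ℙ F V} {x : ℙ F V}

/-- The constraints of rank `k`: for `k = 2` and `k = 3` the lines and planes through `x` that are
spanned by points of `τ`. -/
def rankConstraints (τ : ι → ℙ F V) (x : ℙ F V) (k : ℕ) : Set (Submodule F V) :=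
  {U | U ∈ constraints τ x ∧ finrank F U = k}

lemma rankConstraints_finite [Finite ι] (τ : ι → ℙ F V) (x : ℙ F V) (k : ℕ) :
    (rankConstraints τ x k).Finite :=
  (Set.finite_range (pointSpan τ)).subset fun _ hU => hU.1.1

lemma sup_mem_constraints {U W : Submodule F V} (hU : U ∈ constraints τ x)
    (hW : W ∈ constraints τ x) : U ⊔ W ∈ constraints τ x := by
  obtain ⟨⟨Q, rfl⟩, hx⟩ := hU
  obtain ⟨⟨Q', rfl⟩, -⟩ := hW
  exact ⟨⟨Q ∪ Q', pointSpan_union τ Q Q'⟩, hx.trans le_sup_left⟩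

lemma isDominated_of_mem_range (hx : x ∈ Set.range τ) : IsDominated (constraints τ x) := by
  obtain ⟨i, rfl⟩ := hx
  have hi : pointSpan τ {i} ∈ constraints τ (τ i) := ⟨⟨{i}, rfl⟩, (pointSpan_singleton τ i).ge⟩
  exact Or.inr ⟨_, hi, _, hi, fun U hU => Or.inl ((pointSpan_singleton τ i).le.trans hU.2)⟩

lemma injective_of_not_isDominated
    (hdom : ∀ i, ¬ IsDominated (constraints (deletion τ i) (τ i))) : Function.Injective τ := by
  intro i j hij
  by_contra hne
  exact hdom i (isDominated_of_mem_range ⟨⟨j, Ne.symm hne⟩, hij.symm⟩)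

variable [FiniteDimensional F V]

lemma exists_rankConstraints_succ {U W h : Submodule F V} {k : ℕ}
    (hU : U ∈ rankConstraints τ x k) (hUW : U ≤ W) (hh : h ∈ constraints τ x) (hhW : ¬ h ≤ W) :
    ∃ A ∈ rankConstraints τ x (k + 1), U ≤ A ∧ ¬ A ≤ W := by
  obtain ⟨⟨⟨Q, rfl⟩, hx⟩, rfl⟩ := hU
  obtain ⟨⟨Q', rfl⟩, -⟩ := hh
  obtain ⟨i, -, hi⟩ := Set.not_subset.1 (mt (gc_pointSpan_flat τ Q' W).2 hhW)
  have hspan : pointSpan τ (insert i Q) = (τ i).submodule ⊔ pointSpan τ Q := pointSpan_insert τ i Q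
  refine ⟨_, ⟨⟨⟨insert i Q, hspan⟩, hx.trans le_sup_right⟩, ?_⟩, le_sup_right,
    fun hle => hi (le_sup_left.trans hle)⟩
  exact finrank_submodule_sup_of_not_le fun hle => hi (hle.trans hUW)

lemma eq_of_le_of_mem_rankConstraints {U W : Submodule F V} {k : ℕ}
    (hU : U ∈ rankConstraints τ x k) (hW : W ∈ rankConstraints τ x k) (hUW : U ≤ W) : U = W :=
  Submodule.eq_of_le_of_finrank_eq hUW (hU.2.trans hW.2.symm)

lemma sup_mem_rankConstraints_three {l₁ l₂ : Submodule F V} (h₁ : l₁ ∈ rankConstraints τ x 2)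
    (h₂ : l₂ ∈ rankConstraints τ x 2) (hne : l₁ ≠ l₂) : l₁ ⊔ l₂ ∈ rankConstraints τ x 3 := by
  refine ⟨sup_mem_constraints h₁.1 h₂.1, ?_⟩
  have hsum := Submodule.finrank_sup_add_finrank_inf_eq l₁ l₂
  have hinf : 1 ≤ finrank F ↥(l₁ ⊓ l₂) :=
    x.finrank_submodule ▸ Submodule.finrank_mono (le_inf h₁.1.2 h₂.1.2)
  have hsup : finrank F l₁ < finrank F ↥(l₁ ⊔ l₂) := Submodule.finrank_lt_finrank_of_lt
    (left_lt_sup.2 fun hle => hne (eq_of_le_of_mem_rankConstraints h₂ h₁ hle).symm)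
  rw [h₁.2, h₂.2] at hsum
  rw [h₁.2] at hsup
  lia

lemma exists_minimal_not_le_of_not_isDominated (hdom : ¬ IsDominated (constraints τ x))
    {U₁ U₂ : Submodule F V} (h₁ : U₁ ∈ constraints τ x) (h₂ : U₂ ∈ constraints τ x) :
    ∃ M, Minimal (· ∈ constraints τ x) M ∧ ¬ U₁ ≤ M ∧ ¬ U₂ ≤ M := by
  by_contra! hM
  refine hdom (Or.inr ⟨U₁, h₁, U₂, h₂, fun U hU => ?_⟩)
  obtain ⟨M, hMU, hmin⟩ := exists_minimal_le_of_wellFoundedLT (· ∈ constraints τ x) U hU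
  by_contra! hnot
  exact hnot.2 ((hM M hmin fun hle => hnot.1 (hle.trans hMU)).trans hMU)

lemma mem_rankConstraints_of_not_isDominated (hV : finrank F V ≤ 4)
    (hdom : ¬ IsDominated (constraints τ x)) {M : Submodule F V}
    (hM : Minimal (· ∈ constraints τ x) M) :
    M ∈ rankConstraints τ x 2 ∨ M ∈ rankConstraints τ x 3 := by
  obtain ⟨U, hU, hMU, -⟩ := exists_minimal_not_le_of_not_isDominated hdom hM.1 hM.1
  have hlt : finrank F M < finrank F V := Submodule.finrank_lt fun htop =>
    hMU (hM.le_of_le hU.1 (le_top.trans htop.ge))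
  have hgt : finrank F x.submodule < finrank F M := by
    refine Submodule.finrank_lt_finrank_of_lt (hM.1.2.lt_of_ne fun hx => hdom (Or.inr ?_))
    exact ⟨M, hM.1, M, hM.1, fun U hU => Or.inl (hx ▸ hU.2)⟩
  rw [x.finrank_submodule] at hgt
  exact (show finrank F M = 2 ∨ finrank F M = 3 by lia).imp (⟨hM.1, ·⟩) (⟨hM.1, ·⟩)

lemma exists_three_minimal_of_not_isDominated (hdom : ¬ IsDominated (constraints τ x)) :
    ∃ M₁ M₂ M₃, Minimal (· ∈ constraints τ x) M₁ ∧ Minimal (· ∈ constraints τ x) M₂ ∧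
      Minimal (· ∈ constraints τ x) M₃ ∧ ¬ M₁ ≤ M₂ ∧ ¬ M₁ ≤ M₃ ∧ ¬ M₂ ≤ M₃ := by
  obtain ⟨U, hU⟩ := Set.nonempty_iff_ne_empty.2 fun h => hdom (Or.inl h)
  obtain ⟨M₁, hM₁, -, -⟩ := exists_minimal_not_le_of_not_isDominated hdom hU hU
  obtain ⟨M₂, hM₂, h₁₂, -⟩ := exists_minimal_not_le_of_not_isDominated hdom hM₁.1 hM₁.1
  obtain ⟨M₃, hM₃, h₁₃, h₂₃⟩ := exists_minimal_not_le_of_not_isDominated hdom hM₁.1 hM₂.1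
  exact ⟨M₁, M₂, M₃, hM₁, hM₂, hM₃, h₁₂, h₁₃, h₂₃⟩

lemma three_le_pointRank_univ (hV : finrank F V ≤ 4) (hdom : ¬ IsDominated (constraints τ x)) :
    3 ≤ pointRank τ Set.univ := by
  obtain ⟨M₁, M₂, -, hM₁, hM₂, -, h₁₂, -⟩ := exists_three_minimal_of_not_isDominated hdom
  have hle : M₁ ⊔ M₂ ≤ pointSpan τ Set.univ := by
    obtain ⟨⟨Q, hQ⟩, -⟩ := sup_mem_constraints hM₁.1 hM₂.1
    exact hQ ▸ (gc_pointSpan_flat τ).monotone_l (Set.subset_univ Q)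
  have hlt : finrank F M₂ < finrank F ↥(M₁ ⊔ M₂) :=
    Submodule.finrank_lt_finrank_of_lt (right_lt_sup.2 h₁₂)
  have htwo : 2 ≤ finrank F M₂ := (mem_rankConstraints_of_not_isDominated hV hdom hM₂).elim
    (fun h => h.2.ge) (fun h => by rw [h.2]; simp)
  exact htwo.trans_lt (hlt.trans_le (Submodule.finrank_mono hle))

variable [Finite ι]

lemma four_le_ncard_of_line {l h₁ h₂ : Submodule F V} (hl : l ∈ rankConstraints τ x 2)
    (hh₁ : h₁ ∈ rankConstraints τ x 3) (hh₂ : h₂ ∈ rankConstraints τ x 3) (hne : h₁ ≠ h₂)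
    (hl₁ : ¬ l ≤ h₁) (hl₂ : ¬ l ≤ h₂) : 4 ≤ (rankConstraints τ x 3).ncard := by
  have hnot : ¬ h₁ ≤ l := fun hle => absurd (Submodule.finrank_mono hle) (by rw [hh₁.2, hl.2]; simp)
  obtain ⟨A, hA, hlA, -⟩ := exists_rankConstraints_succ hl le_rfl hh₁.1 hnot
  obtain ⟨B, hB, hlB, hBA⟩ := exists_rankConstraints_succ hl hlA hh₁.1 fun hle =>
    hl₁ (eq_of_le_of_mem_rankConstraints hh₁ hA hle ▸ hlA)
  refine (Set.three_lt_ncard_iff (rankConstraints_finite τ x 3)).2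
    ⟨A, B, h₁, h₂, hA, hB, hh₁, hh₂, ?_, ?_, ?_, ?_, ?_, hne⟩
  · exact fun h => hBA h.ge
  all_goals rintro rfl; contradiction

lemma four_le_ncard_of_lines {l₁ l₂ h : Submodule F V} (hl₁ : l₁ ∈ rankConstraints τ x 2)
    (hl₂ : l₂ ∈ rankConstraints τ x 2) (hne : l₁ ≠ l₂) (hh : h ∈ rankConstraints τ x 3)
    (h₁ : ¬ l₁ ≤ h) (h₂ : ¬ l₂ ≤ h) : 4 ≤ (rankConstraints τ x 3).ncard := by
  have hsup := sup_mem_rankConstraints_three hl₁ hl₂ hne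
  have hnot : ¬ h ≤ l₁ ⊔ l₂ := fun hle =>
    h₁ (eq_of_le_of_mem_rankConstraints hh hsup hle ▸ le_sup_left)
  obtain ⟨A, hA, hlA, hAsup⟩ := exists_rankConstraints_succ hl₁ le_sup_left hh.1 hnot
  obtain ⟨B, hB, hlB, hBsup⟩ := exists_rankConstraints_succ hl₂ le_sup_right hh.1 hnot
  refine (Set.three_lt_ncard_iff (rankConstraints_finite τ x 3)).2
    ⟨l₁ ⊔ l₂, A, B, h, hsup, hA, hB, hh, ?_, ?_, ?_, ?_, ?_, ?_⟩
  · exact fun h => hAsup h.ge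
  · exact fun h => hBsup h.ge
  · exact fun h => h₁ (h ▸ le_sup_left)
  · rintro rfl
    exact hAsup (eq_of_le_of_mem_rankConstraints hsup hA (sup_le hlA hlB)).ge
  all_goals rintro rfl; contradiction

theorem ncard_rankConstraints_of_not_isDominated (hV : finrank F V ≤ 4)
    (hdom : ¬ IsDominated (constraints τ x)) :
    4 ≤ (rankConstraints τ x 3).ncard ∨ 3 ≤ (rankConstraints τ x 2).ncard ∨
      (3 ≤ (rankConstraints τ x 3).ncard ∧ rankConstraints τ x 2 = ∅) := by
  obtain ⟨M₁, M₂, M₃, hM₁, hM₂, hM₃, h₁₂, h₁₃, h₂₃⟩ := exists_three_minimal_of_not_isDominated hdom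
  have h₂₁ : ¬ M₂ ≤ M₁ := fun h => h₁₂ (hM₁.le_of_le hM₂.1 h)
  have h₃₁ : ¬ M₃ ≤ M₁ := fun h => h₁₃ (hM₁.le_of_le hM₃.1 h)
  have h₃₂ : ¬ M₃ ≤ M₂ := fun h => h₂₃ (hM₂.le_of_le hM₃.1 h)
  have hthree (k : ℕ) (h₁ : M₁ ∈ rankConstraints τ x k) (h₂ : M₂ ∈ rankConstraints τ x k)
      (h₃ : M₃ ∈ rankConstraints τ x k) : 3 ≤ (rankConstraints τ x k).ncard :=
    (Set.two_lt_ncard_iff (rankConstraints_finite τ x k)).2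
      ⟨M₁, M₂, M₃, h₁, h₂, h₃, ne_of_not_le h₁₂, ne_of_not_le h₁₃, ne_of_not_le h₂₃⟩
  rcases mem_rankConstraints_of_not_isDominated hV hdom hM₁ with h₁ | h₁ <;>
  rcases mem_rankConstraints_of_not_isDominated hV hdom hM₂ with h₂ | h₂ <;>
  rcases mem_rankConstraints_of_not_isDominated hV hdom hM₃ with h₃ | h₃
  · exact Or.inr (Or.inl (hthree 2 h₁ h₂ h₃))
  · exact Or.inl (four_le_ncard_of_lines h₁ h₂ (ne_of_not_le h₁₂) h₃ h₁₃ h₂₃)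
  · exact Or.inl (four_le_ncard_of_lines h₁ h₃ (ne_of_not_le h₁₃) h₂ h₁₂ h₃₂)
  · exact Or.inl (four_le_ncard_of_line h₁ h₂ h₃ (ne_of_not_le h₂₃) h₁₂ h₁₃)
  · exact Or.inl (four_le_ncard_of_lines h₂ h₃ (ne_of_not_le h₂₃) h₁ h₂₁ h₃₁)
  · exact Or.inl (four_le_ncard_of_line h₂ h₁ h₃ (ne_of_not_le h₁₃) h₂₁ h₂₃)
  · exact Or.inl (four_le_ncard_of_line h₃ h₁ h₂ (ne_of_not_le h₁₂) h₃₁ h₃₂)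
  · rcases (rankConstraints τ x 2).eq_empty_or_nonempty with hempty | ⟨l, hl⟩
    · exact Or.inr (Or.inr ⟨hthree 3 h₁ h₂ h₃, hempty⟩)
    · have hnot (M : Submodule F V) (hM : Minimal (· ∈ constraints τ x) M)
          (h : M ∈ rankConstraints τ x 3) : ¬ l ≤ M := fun hle => by
        have := (hM.eq_of_le hl.1 hle) ▸ hl.2
        exact absurd (h.2.symm.trans this) (by decide)
      exact Or.inl (four_le_ncard_of_line hl h₁ h₂ (ne_of_not_le h₁₂) (hnot M₁ hM₁ h₁)
        (hnot M₂ hM₂ h₂))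

end Undominated

/-! ### The planar space of a configuration -/

section RankFlats

variable {F V ι : Type*} [DivisionRing F] [AddCommGroup V] [Module F V]

/-- The flats of rank `k` of a configuration: for `k = 2` and `k = 3` the sets of labels cut out by
the lines and planes that are spanned by points of `τ`. -/
def rankFlats (τ : ι → ℙ F V) (k : ℕ) : Set (Set ι) :=
  {A | flat τ (pointSpan τ A) = A ∧ pointRank τ A = k}

lemma flat_pointSpan_mem_rankFlats (τ : ι → ℙ F V) (Q : Set ι) :
    flat τ (pointSpan τ Q) ∈ rankFlats τ (pointRank τ Q) :=
  ⟨(gc_pointSpan_flat τ).u_l_u_eq_u _,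
    congrArg (fun U : Submodule F V => finrank F U) ((gc_pointSpan_flat τ).l_u_l_eq_l Q)⟩

lemma subset_flat_pointSpan (τ : ι → ℙ F V) (Q : Set ι) : Q ⊆ flat τ (pointSpan τ Q) :=
  (gc_pointSpan_flat τ).le_u_l Q

variable [FiniteDimensional F V]

lemma eq_flat_pointSpan_of_mem_rankFlats {τ : ι → ℙ F V} {Q A : Set ι}
    (hA : A ∈ rankFlats τ (pointRank τ Q)) (hQA : Q ⊆ A) : A = flat τ (pointSpan τ Q) := by
  rw [Submodule.eq_of_le_of_finrank_eq ((gc_pointSpan_flat τ).monotone_l hQA) hA.2.symm, hA.1]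

lemma exists_superset_pointRank_eq {τ : ι → ℙ F V} {Q : Set ι} {k : ℕ} (hQ : pointRank τ Q ≤ k)
    (hk : k ≤ pointRank τ Set.univ) : ∃ A, Q ⊆ A ∧ pointRank τ A = k := by
  induction k, hQ using Nat.le_induction with
  | base => exact ⟨Q, subset_rfl, rfl⟩
  | succ k _ ih =>
    obtain ⟨A, hQA, rfl⟩ := ih (Nat.le_of_succ_le hk)
    have hnot : ¬ pointSpan τ Set.univ ≤ pointSpan τ A := fun hle =>
      hk.not_gt (Nat.lt_succ_of_le (Submodule.finrank_mono hle))
    obtain ⟨i, -, hi⟩ := Set.not_subset.1 (mt (gc_pointSpan_flat τ _ _).2 hnot)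
    exact ⟨insert i A, hQA.trans (Set.subset_insert i A), pointRank_insert_of_not_le τ hi⟩

lemma exists_rankFlats_superset_iff {τ : ι → ℙ F V} {Q : Set ι} {k : ℕ}
    (hk : k ≤ pointRank τ Set.univ) : (∃ A ∈ rankFlats τ k, Q ⊆ A) ↔ pointRank τ Q ≤ k := by
  refine ⟨fun ⟨A, hA, hQA⟩ => hA.2 ▸ pointRank_mono τ hQA, fun hQ => ?_⟩
  obtain ⟨A, hQA, rfl⟩ := exists_superset_pointRank_eq hQ hk
  exact ⟨_, flat_pointSpan_mem_rankFlats τ A, hQA.trans (subset_flat_pointSpan τ A)⟩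

lemma flat_mem_rankFlats_of_mem_rankConstraints [Finite ι] {τ : ι → ℙ F V} {p : ι}
    {U : Submodule F V} {k : ℕ} (hU : U ∈ rankConstraints (deletion τ p) (τ p) k) :
    flat τ U ∈ rankFlats τ k ∧ k + 1 ≤ (flat τ U).ncard ∧ pointSpan τ (flat τ U) = U := by
  obtain ⟨⟨⟨Q, rfl⟩, hp⟩, rfl⟩ := hU
  have hpQ : p ∉ Subtype.val '' Q := by simp
  rw [pointSpan_comp] at hp ⊢
  refine ⟨flat_pointSpan_mem_rankFlats τ _, ?_, (gc_pointSpan_flat τ).l_u_l_eq_l _⟩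
  calc pointRank τ (Subtype.val '' Q) + 1
      ≤ (Subtype.val '' Q).ncard + 1 := Nat.succ_le_succ (pointRank_le_ncard τ (Set.toFinite _))
    _ = (insert p (Subtype.val '' Q)).ncard := (Set.ncard_insert_of_notMem hpQ).symm
    _ ≤ (flat τ (pointSpan τ (Subtype.val '' Q))).ncard :=
      Set.ncard_le_ncard (Set.insert_subset hp (subset_flat_pointSpan τ _))

lemma rankConstraints_two_nonempty {τ : ι → ℙ F V} (hτ : Function.Injective τ) {A : Set ι} {p : ι}
    (hA : A ∈ rankFlats τ 2) (hp : p ∈ A) (hcard : 3 ≤ A.ncard) :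
    (rankConstraints (deletion τ p) (τ p) 2).Nonempty := by
  have hrank : 2 ≤ pointRank τ (A \ {p}) := by
    by_contra! hlt
    have hsub := (pointRank_le_one_iff hτ).1 (Nat.le_of_lt_succ hlt)
    have hle := (Set.ncard_le_one hsub.finite).2 hsub
    rw [Set.ncard_sdiff_singleton_of_mem hp] at hle
    lia
  have hspan : pointSpan τ (A \ {p}) = pointSpan τ A :=
    Submodule.eq_of_le_of_finrank_le ((gc_pointSpan_flat τ).monotone_l Set.sdiff_subset)
      (hA.2.trans_le hrank)
  refine ⟨pointSpan τ A, ⟨⟨Subtype.val ⁻¹' A, ?_⟩, submodule_le_pointSpan τ hp⟩, hA.2⟩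
  rw [pointSpan_comp, image_val_preimage_val_ne, hspan]

lemma pointRank_eq_of_le_iff {E W : Type*} [DivisionRing E] [AddCommGroup W] [Module E W]
    [FiniteDimensional E W] {τ : ι → ℙ F V} {σ : ι → ℙ E W} (hV : finrank F V ≤ 4)
    (hW : finrank E W ≤ 4) (hτ : Function.Injective τ) (hσ : Function.Injective σ)
    (h₂ : ∀ A, pointRank τ A ≤ 2 ↔ pointRank σ A ≤ 2)
    (h₃ : ∀ A, pointRank τ A ≤ 3 ↔ pointRank σ A ≤ 3) : pointRank σ = pointRank τ := by
  funext A
  have h₀ : pointRank τ A = 0 ↔ pointRank σ A = 0 :=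
    pointRank_eq_zero_iff.trans pointRank_eq_zero_iff.symm
  have h₁ : pointRank τ A ≤ 1 ↔ pointRank σ A ≤ 1 :=
    (pointRank_le_one_iff hτ).trans (pointRank_le_one_iff hσ).symm
  have hτ₄ := (pointRank_le_finrank τ A).trans hV
  have hσ₄ := (pointRank_le_finrank σ A).trans hW
  grind

end RankFlats

section Labels

variable {P : Finset ℕ}

/-- The finite set of natural numbers underlying a set of labels taken from `P`. -/
noncomputable def labels (A : Set {x // x ∈ P}) : Finset ℕ :=
  (Set.toFinite A).toFinset.map (.subtype _)

lemma coe_labels (A : Set {x // x ∈ P}) : (labels A : Set ℕ) = Subtype.val '' A := by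
  rw [labels, Finset.coe_map, Set.Finite.coe_toFinset]
  rfl

lemma labels_injective : Function.Injective (labels (P := P)) := fun A B h => by
  have himage := congrArg (fun l : Finset ℕ => (l : Set ℕ)) h
  simp only [coe_labels] at himage
  exact Subtype.val_injective.image_injective himage

lemma labels_subset (A : Set {x // x ∈ P}) : labels A ⊆ P := fun a ha => by
  rw [← Finset.mem_coe, coe_labels] at ha
  obtain ⟨x, -, rfl⟩ := ha
  exact x.2

lemma preimage_val_labels (A : Set {x // x ∈ P}) :
    Subtype.val ⁻¹' (labels A : Set ℕ) = A := by
  rw [coe_labels, Set.preimage_image_eq _ Subtype.val_injective]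

lemma card_labels (A : Set {x // x ∈ P}) : (labels A).card = A.ncard := by
  rw [← Set.ncard_coe_finset, coe_labels, Set.ncard_image_of_injective _ Subtype.val_injective]

lemma coe_mem_labels {A : Set {x // x ∈ P}} {x : {x // x ∈ P}} : ↑x ∈ labels A ↔ x ∈ A := by
  rw [← Finset.mem_coe, coe_labels, Subtype.val_injective.mem_set_image]

lemma subset_labels_iff {Q : Finset ℕ} (hQ : Q ⊆ P) {A : Set {x // x ∈ P}} :
    Q ⊆ labels A ↔ Subtype.val ⁻¹' (Q : Set ℕ) ⊆ A :=
  ⟨fun h _ hx => coe_mem_labels.1 (h hx), fun h a ha =>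
    (coe_mem_labels (x := ⟨a, hQ ha⟩)).2 (h ha)⟩

variable {F V : Type*} [DivisionRing F] [AddCommGroup V] [Module F V]

/-- The flats of rank `k` of a configuration labelled by `P`, as sets of natural numbers. The
configuration determines the planar space `(P, flats τ 2, flats τ 3)`. -/
noncomputable def flats (τ : {x // x ∈ P} → ℙ F V) (k : ℕ) : Finset (Finset ℕ) :=
  ((rankFlats τ k).toFinite.image labels).toFinset

lemma mem_flats {τ : {x // x ∈ P} → ℙ F V} {k : ℕ} {l : Finset ℕ} :
    l ∈ flats τ k ↔ ∃ A ∈ rankFlats τ k, labels A = l := by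
  rw [flats, Set.Finite.mem_toFinset, Set.mem_image]

variable [FiniteDimensional F V] {τ : {x // x ∈ P} → ℙ F V}

lemma pointRank_preimage_val_le_card (τ : {x // x ∈ P} → ℙ F V) (Q : Finset ℕ) :
    pointRank τ (Subtype.val ⁻¹' (Q : Set ℕ)) ≤ Q.card := by
  refine (pointRank_le_ncard τ (Set.toFinite _)).trans ?_
  rw [← Set.ncard_image_of_injective _ Subtype.val_injective, ← Set.ncard_coe_finset Q]
  exact Set.ncard_le_ncard (Set.image_preimage_subset _ _)

lemma existsUnique_mem_flats_superset {Q : Finset ℕ} (hQ : Q ⊆ P) {k : ℕ}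
    (hk : pointRank τ (Subtype.val ⁻¹' (Q : Set ℕ)) = k) : ∃! l, l ∈ flats τ k ∧ Q ⊆ l := by
  subst hk
  refine ⟨labels (flat τ (pointSpan τ (Subtype.val ⁻¹' (Q : Set ℕ)))),
    ⟨mem_flats.2 ⟨_, flat_pointSpan_mem_rankFlats τ _, rfl⟩,
      (subset_labels_iff hQ).2 (subset_flat_pointSpan τ _)⟩, ?_⟩
  rintro l ⟨hl, hQl⟩
  obtain ⟨A, hA, rfl⟩ := mem_flats.1 hl
  rw [eq_flat_pointSpan_of_mem_rankFlats hA ((subset_labels_iff hQ).1 hQl)]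

lemma exists_mem_flats_superset_iff {Q : Finset ℕ} (hQ : Q ⊆ P) {k : ℕ}
    (hk : k ≤ pointRank τ Set.univ) :
    (∃ l ∈ flats τ k, Q ⊆ l) ↔ pointRank τ (Subtype.val ⁻¹' (Q : Set ℕ)) ≤ k := by
  rw [← exists_rankFlats_superset_iff hk]
  constructor
  · rintro ⟨l, hl, hQl⟩
    obtain ⟨A, hA, rfl⟩ := mem_flats.1 hl
    exact ⟨A, hA, (subset_labels_iff hQ).1 hQl⟩
  · rintro ⟨A, hA, hQA⟩
    exact ⟨labels A, mem_flats.2 ⟨A, hA, rfl⟩, (subset_labels_iff hQ).2 hQA⟩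

lemma isPlanarSpace_flats (hτ : Function.Injective τ) :
    IsPlanarSpace P (flats τ 2) (flats τ 3) := by
  have htwo {a b : ℕ} (ha : a ∈ P) (hb : b ∈ P) (hab : a ≠ b) :
      pointRank τ (Subtype.val ⁻¹' (({a, b} : Finset ℕ) : Set ℕ)) = 2 := by
    rw [show Subtype.val ⁻¹' (({a, b} : Finset ℕ) : Set ℕ) =
      {(⟨a, ha⟩ : {x // x ∈ P}), ⟨b, hb⟩} by ext; simp [Subtype.ext_iff]]
    exact pointRank_pair hτ (Subtype.coe_ne_coe.1 hab)
  refine ⟨fun l hl => ?_, fun h hh => ?_, fun a ha b hb hab => ?_,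
    fun a ha b hb c hc hab _ _ hline => ?_⟩
  · obtain ⟨A, hA, rfl⟩ := mem_flats.1 hl
    exact ⟨labels_subset A, card_labels A ▸ hA.2 ▸ pointRank_le_ncard τ (Set.toFinite A)⟩
  · obtain ⟨A, -, rfl⟩ := mem_flats.1 hh
    exact labels_subset A
  · have hQ : ({a, b} : Finset ℕ) ⊆ P := Finset.insert_subset ha (Finset.singleton_subset_iff.2 hb)
    simpa only [Finset.insert_subset_iff, Finset.singleton_subset_iff] using
      existsUnique_mem_flats_superset hQ (htwo ha hb hab)
  · have hQ : ({a, b, c} : Finset ℕ) ⊆ P :=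
      Finset.insert_subset ha (Finset.insert_subset hb (Finset.singleton_subset_iff.2 hc))
    have huniv : 2 ≤ pointRank τ Set.univ :=
      (htwo ha hb hab).ge.trans (pointRank_mono τ (Set.subset_univ _))
    have hline' : ¬ ∃ l ∈ flats τ 2, ({a, b, c} : Finset ℕ) ⊆ l := by
      simpa only [Finset.insert_subset_iff, Finset.singleton_subset_iff] using hline
    rw [exists_mem_flats_superset_iff hQ huniv, not_le] at hline'
    have hthree := (pointRank_preimage_val_le_card τ {a, b, c}).trans Finset.card_le_three
    simpa only [Finset.insert_subset_iff, Finset.singleton_subset_iff] using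
      existsUnique_mem_flats_superset hQ (hthree.antisymm hline')

lemma ncard_rankConstraints_le_card_flats (τ : {x // x ∈ P} → ℙ F V) (p : {x // x ∈ P}) (k : ℕ) :
    (rankConstraints (deletion τ p) (τ p) k).ncard ≤
      ((flats τ k).filter fun l => ↑p ∈ l ∧ k + 1 ≤ l.card).card := by
  rw [← Set.ncard_coe_finset]
  refine Set.ncard_le_ncard_of_injOn (fun U => labels (flat τ U)) (fun U hU => ?_)
    (fun U hU U' hU' h => ?_) (Finset.finite_toSet _)
  · obtain ⟨hflat, hcard, -⟩ := flat_mem_rankFlats_of_mem_rankConstraints hU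
    exact Finset.mem_coe.2 (Finset.mem_filter.2 ⟨mem_flats.2 ⟨_, hflat, rfl⟩,
      coe_mem_labels.2 hU.1.2, (card_labels _).symm ▸ hcard⟩)
  · rw [← (flat_mem_rankFlats_of_mem_rankConstraints hU).2.2, labels_injective h,
      (flat_mem_rankFlats_of_mem_rankConstraints hU').2.2]

lemma lineIndex_flats_eq_zero (hτ : Function.Injective τ) {p : {x // x ∈ P}}
    (hp : rankConstraints (deletion τ p) (τ p) 2 = ∅) : lineIndex (flats τ 2) p = 0 := by
  refine Finset.card_eq_zero.2 (Finset.filter_eq_empty_iff.2 fun l hl => ?_)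
  rintro ⟨hpl, hcard⟩
  obtain ⟨A, hA, rfl⟩ := mem_flats.1 hl
  rw [card_labels] at hcard
  exact (rankConstraints_two_nonempty hτ hA (coe_mem_labels.1 hpl) hcard).ne_empty hp

theorem isHyperfiguration_flats (hV : finrank F V ≤ 4)
    (hdom : ∀ p, ¬ IsDominated (constraints (deletion τ p) (τ p))) :
    IsHyperfiguration P (flats τ 2) (flats τ 3) := by
  have hτ := injective_of_not_isDominated hdom
  refine ⟨isPlanarSpace_flats hτ, fun p hp => ?_⟩
  have hplane := ncard_rankConstraints_le_card_flats τ ⟨p, hp⟩ 3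
  have hline := ncard_rankConstraints_le_card_flats τ ⟨p, hp⟩ 2
  rcases ncard_rankConstraints_of_not_isDominated hV (hdom ⟨p, hp⟩) with h | h | ⟨h, hempty⟩
  · exact Or.inl (h.trans hplane)
  · exact Or.inr (Or.inl (h.trans hline))
  · rcases (h.trans hplane).eq_or_lt with heq | hlt
    · exact Or.inr (Or.inr ⟨heq.symm, lineIndex_flats_eq_zero hτ hempty⟩)
    · exact Or.inl hlt

end Labels

lemma finrank_spanOf {F : Type} [Field F] {P : Finset ℕ} (σ : {x // x ∈ P} → ℙ F (Fin 4 → F))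
    (Q : Finset ℕ) : finrank F (spanOf σ Q) = pointRank σ (Subtype.val ⁻¹' (Q : Set ℕ)) :=
  rfl

lemma isStrongReal3_flats_iff {P : Finset ℕ} {E F : Type} [Field E] [Field F]
    {τ : {x // x ∈ P} → ℙ E (Fin 4 → E)} (hτ : Function.Injective τ)
    (huniv : 3 ≤ pointRank τ Set.univ) (σ : {x // x ∈ P} → ℙ F (Fin 4 → F)) :
    IsStrongReal3 F P (flats τ 2) (flats τ 3) σ ↔ pointRank σ = pointRank τ := by
  have hflat₂ {Q : Finset ℕ} (hQ : Q ⊆ P) :=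
    exists_mem_flats_superset_iff (τ := τ) hQ (Nat.le_of_succ_le huniv)
  have hflat₃ {Q : Finset ℕ} (hQ : Q ⊆ P) := exists_mem_flats_superset_iff (τ := τ) hQ huniv
  constructor
  · rintro ⟨hσ, hreal⟩
    have hle (A : Set {x // x ∈ P}) : (pointRank τ A ≤ 2 ↔ pointRank σ A ≤ 2) ∧
        (pointRank τ A ≤ 3 ↔ pointRank σ A ≤ 3) := by
      have h := hreal (labels A) (labels_subset A)
      rwa [hflat₂ (labels_subset A), hflat₃ (labels_subset A), finrank_spanOf,
        preimage_val_labels] at h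
    exact pointRank_eq_of_le_iff (finrank_fin_fun E).le (finrank_fin_fun F).le hτ hσ
      (fun A => (hle A).1) (fun A => (hle A).2)
  · intro h
    refine ⟨(injective_iff_pointRank σ).2 (h ▸ (injective_iff_pointRank τ).1 hτ), fun Q hQ => ?_⟩
    rw [hflat₂ hQ, hflat₃ hQ, finrank_spanOf, h]
    exact ⟨Iff.rfl, Iff.rfl⟩

/-! ### Isomorphism classes of hyperfigurations -/

section Isomorphism

open scoped Pointwise

/-- A candidate planar space, given by its points, lines and planes. The group of permutations
of `ℕ` acts on these triples by relabelling. -/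
abbrev IncidenceTriple := Finset ℕ × Finset (Finset ℕ) × Finset (Finset ℕ)

/-- All lines and planes of the triple consist of points of it. -/
def IsSupported (s : IncidenceTriple) : Prop :=
  (∀ l ∈ s.2.1, l ⊆ s.1) ∧ ∀ h ∈ s.2.2, h ⊆ s.1

/-- The hyperfigurations on at most `n` points. -/
def hyperfigurations (n : ℕ) : Set IncidenceTriple :=
  {s | IsHyperfiguration s.1 s.2.1 s.2.2 ∧ s.1.card ≤ n}

/-- The number of strong realizations of `s`, as a function of the finite field. -/
noncomputable def strongRealCount (s : IncidenceTriple) : FinField → ℤ := fun F =>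
  Nat.card {σ : {x // x ∈ s.1} → ℙ F (Fin 4 → F) // IsStrongReal3 F s.1 s.2.1 s.2.2 σ}

lemma IsHyperfiguration.isSupported {s : IncidenceTriple}
    (hs : IsHyperfiguration s.1 s.2.1 s.2.2) : IsSupported s :=
  ⟨fun l hl => (hs.1.1 l hl).1, hs.1.2.1⟩

lemma IsSupported.smul {s : IncidenceTriple} (hs : IsSupported s) (g : Equiv.Perm ℕ) :
    IsSupported (g • s) := by
  have hsub {L : Finset (Finset ℕ)} (hL : ∀ l ∈ L, l ⊆ s.1) : ∀ l ∈ g • L, l ⊆ g • s.1 := by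
    rintro _ hgl
    obtain ⟨l, hl, rfl⟩ := Finset.mem_smul_finset.1 hgl
    exact Finset.smul_finset_subset_smul_finset (hL l hl)
  exact ⟨hsub hs.1, hsub hs.2⟩

lemma exists_perm_eqOn {α : Type*} {P : Finset α} {e : α → α} (he : Set.InjOn e P) :
    ∃ g : Equiv.Perm α, Set.EqOn g e P := by
  obtain ⟨g, hg⟩ := Equiv.Perm.exists_extending_pair (Subtype.val : P → α) (fun x => e x)
    Subtype.val_injective he.injective
  exact ⟨g, fun x hx => hg ⟨x, hx⟩⟩

lemma exists_perm_smul_eq_range (P : Finset ℕ) :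
    ∃ g : Equiv.Perm ℕ, g • P = Finset.range P.card := by
  obtain ⟨g, hg⟩ := Equiv.Perm.exists_map_finset_eq P _ (Finset.card_range P.card).symm
  exact ⟨g, by rw [← hg, Finset.map_eq_image]; rfl⟩

lemma image_image_eq_smul {P : Finset ℕ} {g : Equiv.Perm ℕ} {e : ℕ → ℕ} (hg : Set.EqOn g e P)
    {L : Finset (Finset ℕ)} (hL : ∀ l ∈ L, l ⊆ P) : L.image (Finset.image e) = g • L :=
  Finset.image_congr fun l hl => Finset.image_congr fun _ hx => (hg (hL l hl hx)).symm

lemma psIso_iff {s t : IncidenceTriple} (hs : IsSupported s) :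
    PSIso s t ↔ ∃ g : Equiv.Perm ℕ, g • s = t := by
  constructor
  · rintro ⟨e, he, hL, hH⟩
    obtain ⟨g, hg⟩ := exists_perm_eqOn he.injOn
    refine ⟨g, Prod.ext (Finset.coe_injective ?_) (Prod.ext ?_ ?_)⟩
    · rw [Prod.smul_fst, Finset.coe_smul_finset, ← he.image_eq]
      exact hg.image_eq
    · rw [hL, image_image_eq_smul hg hs.1]
      rfl
    · rw [hH, image_image_eq_smul hg hs.2]
      rfl
  · rintro ⟨g, rfl⟩
    refine ⟨g, ?_, rfl, rfl⟩
    rw [Prod.smul_fst, Finset.coe_smul_finset]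
    exact g.injective.injOn.bijOn_image

lemma isStrongReal3_smul_iff {F : Type} [Field F] {s : IncidenceTriple} (g : Equiv.Perm ℕ)
    (σ : {x // x ∈ (g • s).1} → ℙ F (Fin 4 → F)) (e : {x // x ∈ s.1} ≃ {x // x ∈ (g • s).1})
    (he : ∀ x, (e x : ℕ) = g x) :
    IsStrongReal3 F (g • s).1 (g • s).2.1 (g • s).2.2 σ ↔
      IsStrongReal3 F s.1 s.2.1 s.2.2 (σ ∘ e) := by
  have hspan (Q : Finset ℕ) : finrank F (spanOf (σ ∘ e) Q) = finrank F (spanOf σ (g • Q)) := by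
    rw [finrank_spanOf, finrank_spanOf, pointRank_comp, e.image_eq_preimage_symm]
    refine congrArg _ (Set.ext fun x => ?_)
    have := he (e.symm x)
    rw [e.apply_symm_apply] at this
    simp only [Set.mem_preimage, Finset.mem_coe, this]
    exact (Finset.smul_mem_smul_finset_iff g).symm
  have hsub (L : Finset (Finset ℕ)) (Q : Finset ℕ) :
      (∃ l ∈ g • L, g • Q ⊆ l) ↔ ∃ l ∈ L, Q ⊆ l := by
    simp [Finset.mem_smul_finset, Finset.smul_finset_subset_smul_finset_iff]
  refine and_congr (e.injective_comp σ).symm ?_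
  rw [(MulAction.surjective g).forall]
  refine forall_congr' fun Q => ?_
  rw [hspan, ← hsub s.2.1, ← hsub s.2.2,
    ← Finset.smul_finset_subset_smul_finset_iff (s := Q) (a := g)]
  rfl

lemma strongRealCount_smul (g : Equiv.Perm ℕ) (s : IncidenceTriple) :
    strongRealCount (g • s) = strongRealCount s := by
  let e : {x // x ∈ s.1} ≃ {x // x ∈ (g • s).1} :=
    g.subtypeEquiv fun x => (Finset.smul_mem_smul_finset_iff g).symm
  funext F
  refine congrArg Nat.cast (Nat.card_congr ((e.arrowCongr (Equiv.refl _)).symm.subtypeEquiv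
    fun σ => isStrongReal3_smul_iff g σ e fun _ => rfl))

lemma strongRealCount_eq_of_psIso {s t : IncidenceTriple} (hs : IsSupported s) (h : PSIso s t) :
    strongRealCount t = strongRealCount s := by
  obtain ⟨g, rfl⟩ := (psIso_iff hs).1 h
  exact strongRealCount_smul g s

lemma exists_finset_representatives {α : Type*} (r : Setoid α) {S T : Set α} (hT : T.Finite)
    (hST : ∀ s ∈ S, ∃ t ∈ T, r s t) :
    ∃ R : Finset α, ↑R ⊆ S ∧ ∀ s ∈ S, ∃! t, t ∈ R ∧ r s t := by
  obtain ⟨R, hRS, hR⟩ := Set.exists_subset_bijOn S (Quotient.mk r)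
  have hfin : R.Finite := by
    refine Set.Finite.of_finite_image ((hT.image (Quotient.mk r)).subset ?_) hR.injOn
    rintro _ ⟨s, hs, rfl⟩
    obtain ⟨t, ht, hst⟩ := hST s (hRS hs)
    exact ⟨t, ht, (Quotient.sound hst).symm⟩
  refine ⟨hfin.toFinset, by rwa [hfin.coe_toFinset], fun s hs => ?_⟩
  obtain ⟨t, ht, hts⟩ := hR.surjOn (Set.mem_image_of_mem _ hs)
  refine ⟨t, ⟨hfin.mem_toFinset.2 ht, (Quotient.exact hts.symm)⟩, fun u ⟨hu, hsu⟩ => ?_⟩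
  exact hR.injOn (hfin.mem_toFinset.1 hu) ht ((Quotient.sound hsu).symm.trans hts.symm)

theorem exists_hyperfiguration_representatives (n : ℕ) :
    ∃ R : Finset IncidenceTriple, ↑R ⊆ hyperfigurations n ∧
      ∀ s ∈ hyperfigurations n, ∃! t, t ∈ R ∧ PSIso s t := by
  let B := (Finset.range n).powerset
  obtain ⟨R, hRS, hR⟩ := exists_finset_representatives (MulAction.orbitRel (Equiv.Perm ℕ) _)
    (S := hyperfigurations n) (Finset.finite_toSet (B ×ˢ B.powerset ×ˢ B.powerset)) <| by
    rintro s ⟨hs, hcard⟩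
    obtain ⟨g, hg⟩ := exists_perm_smul_eq_range s.1
    have hP : (g • s).1 ⊆ Finset.range n := hg.trans_subset (Finset.range_subset_range.2 hcard)
    obtain ⟨hL, hH⟩ := hs.isSupported.smul g
    refine ⟨g • s, ?_, ⟨g⁻¹, inv_smul_smul g s⟩⟩
    simp only [B, Finset.mem_coe, Finset.mem_product, Finset.mem_powerset]
    exact ⟨hP, fun l hl => Finset.mem_powerset.2 ((hL l hl).trans hP),
      fun h hh => Finset.mem_powerset.2 ((hH h hh).trans hP)⟩
  refine ⟨R, hRS, fun s hs => ?_⟩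
  have hiso (t : IncidenceTriple) : MulAction.orbitRel (Equiv.Perm ℕ) _ s t ↔ PSIso s t := by
    rw [psIso_iff hs.1.isSupported]
    exact MulAction.mem_orbit_symm
  simpa only [hiso] using hR s hs

end Isomorphism

/-! ### Configuration counts are combinations of hyperfiguration counts -/

section Main

/-- The functions of the finite field that are combinations of `1` and of the counts of strong
realizations of hyperfigurations on at most `n` points, with coefficients polynomial in `q`. -/
noncomputable def hyperfigurationModule (n : ℕ) : Submodule ℤ[X] (FinField → ℤ) :=
  Submodule.span ℤ[X] (insert 1 (strongRealCount '' hyperfigurations n))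

lemma configCount_eq_one {ι E : Type*} [IsEmpty ι] [DivisionRing E] {d : ℕ}
    (τ : ι → ℙ E (Fin d → E)) : configCount d (pointRank τ) = 1 := by
  funext F
  have hrank (σ : ι → ℙ F (Fin d → F)) : pointRank σ = pointRank τ := funext fun Q => by
    rw [Set.eq_empty_of_isEmpty Q, pointRank_empty, pointRank_empty]
  have : Unique {σ : ι → ℙ F (Fin d → F) // pointRank σ = pointRank τ} :=
    ⟨⟨⟨isEmptyElim, hrank _⟩⟩, fun σ => Subsingleton.elim _ _⟩
  rw [configCount, Nat.card_unique, Nat.cast_one, Pi.one_apply]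

lemma configCount_eq_strongRealCount {P : Finset ℕ} {E : Type} [Field E]
    {τ : {x // x ∈ P} → ℙ E (Fin 4 → E)} (hτ : Function.Injective τ)
    (huniv : 3 ≤ pointRank τ Set.univ) :
    configCount 4 (pointRank τ) = strongRealCount (P, flats τ 2, flats τ 3) := by
  funext F
  exact congrArg Nat.cast (Nat.card_congr (Equiv.subtypeEquivRight fun σ =>
    (isStrongReal3_flats_iff hτ huniv σ).symm))

lemma configCount_mem_of_not_isDominated {P : Finset ℕ} {n : ℕ} (hP : P.card ≤ n) {E : Type}
    [Field E] {τ : {x // x ∈ P} → ℙ E (Fin 4 → E)}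
    (hdom : ∀ p, ¬ IsDominated (constraints (deletion τ p) (τ p))) :
    configCount 4 (pointRank τ) ∈ hyperfigurationModule n := by
  have hE : finrank E (Fin 4 → E) ≤ 4 := (finrank_fin_fun E).le
  rcases isEmpty_or_nonempty {x // x ∈ P} with hempty | ⟨⟨p⟩⟩
  · rw [configCount_eq_one]
    exact Submodule.subset_span (Set.mem_insert _ _)
  · have huniv : 3 ≤ pointRank τ Set.univ :=
      (three_le_pointRank_univ hE (hdom p)).trans
        ((pointRank_comp τ _ _).trans_le (pointRank_mono τ (Set.subset_univ _)))
    rw [configCount_eq_strongRealCount (injective_of_not_isDominated hdom) huniv]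
    exact Submodule.subset_span (Set.mem_insert_of_mem _
      (Set.mem_image_of_mem _ ⟨isHyperfiguration_flats hE hdom, hP⟩))

lemma configCount_mem_of_deletion {P : Finset ℕ} {n : ℕ} (hP : P.card ≤ n)
    (hdel : ∀ (p : {x // x ∈ P}) (r : Set {x // x ≠ p} → ℕ),
      configCount 4 r ∈ hyperfigurationModule n)
    (r : Set {x // x ∈ P} → ℕ) : configCount 4 r ∈ hyperfigurationModule n := by
  induction r using WellFoundedLT.induction with
  | ind r ih =>
    by_cases hr : ∃ (E : FinField) (τ : {x // x ∈ P} → ℙ E (Fin 4 → E)), pointRank τ = r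
    · obtain ⟨E, τ, rfl⟩ := hr
      by_cases hdom : ∃ p, IsDominated (constraints (deletion τ p) (τ p))
      · obtain ⟨p, hp⟩ := hdom
        exact configCount_mem_of_isDominated hp (hdel p _) ih
      · exact configCount_mem_of_not_isDominated hP (not_exists.1 hdom)
    · rw [configCount_eq_zero fun F σ hσ => hr ⟨F, σ, hσ⟩]
      exact Submodule.zero_mem _

theorem configCount_mem_hyperfigurationModule {ι : Type} [Finite ι] {n : ℕ} (hn : Nat.card ι ≤ n)
    (r : Set ι → ℕ) : configCount 4 r ∈ hyperfigurationModule n := by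
  induction hm : Nat.card ι using Nat.strong_induction_on generalizing ι with
  | h m ih =>
    have e : {x // x ∈ Finset.range m} ≃ ι :=
      (Finset.equivFinOfCardEq (Finset.card_range m)).trans (Finite.equivFinOfCardEq hm).symm
    rw [← configCount_comp_image e]
    refine configCount_mem_of_deletion (by rwa [Finset.card_range, ← hm]) (fun p r' => ?_) _
    have hlt : Nat.card {x // x ≠ p} < m :=
      (Finite.card_subtype_lt fun hne => hne rfl).trans_eq
        ((Nat.card_congr e).trans hm)
    exact ih _ hlt (hlt.le.trans (hm ▸ hn)) r' rfl

/-- The property of a rank function that the points are distinct and no four are coplanar. -/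
def IsArcRank {ι : Type*} (r : Set ι → ℕ) : Prop :=
  (∀ i j, r {i, j} = 1 → i = j) ∧
    ∀ a b c d, a ≠ b → a ≠ c → a ≠ d → b ≠ c → b ≠ d → c ≠ d → ¬ r {a, b, c, d} ≤ 3

lemma coplanar4_iff {F ι : Type} [Field F] (σ : ι → ℙ F (Fin 4 → F)) (a b c d : ι) :
    Coplanar4 F (σ a) (σ b) (σ c) (σ d) ↔ pointRank σ {a, b, c, d} ≤ 3 := by
  rw [Coplanar4, pointRank, pointSpan_insert, pointSpan_insert, pointSpan_insert,
    pointSpan_singleton, sup_assoc, sup_assoc]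

lemma isArc4_iff {F : Type} [Field F] {n : ℕ} {σ : Fin n → ℙ F (Fin 4 → F)} :
    IsArc4 F σ ↔ IsArcRank (pointRank σ) := by
  simp only [IsArc4, IsArcRank, injective_iff_pointRank, coplanar4_iff]

/-- The number of ordered `n`-arcs in `ℙ³(F)`, as a function of the finite field `F`. -/
noncomputable def arcCount (n : ℕ) : FinField → ℤ := fun F =>
  Nat.card {σ : Fin n → ℙ F (Fin 4 → F) // IsArc4 F σ}

lemma arcCount_eq_sum (n : ℕ) :
    ∃ T : Finset (Set (Fin n) → ℕ), arcCount n = ∑ r ∈ T, configCount 4 r := by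
  classical
  refine ⟨(Finset.Iic fun _ => 4).filter IsArcRank, funext fun F => ?_⟩
  rw [← natCard_pointRank_mem]
  refine congrArg Nat.cast (Nat.card_congr (Equiv.subtypeEquivRight fun σ => ?_))
  have hle : pointRank σ ≤ fun _ => 4 := fun Q =>
    (pointRank_le_finrank σ Q).trans_eq (finrank_fin_fun F)
  simp only [isArc4_iff, Finset.mem_filter, Finset.mem_Iic, hle, true_and]

theorem arcCount_mem_hyperfigurationModule (n : ℕ) : arcCount n ∈ hyperfigurationModule n := by
  obtain ⟨T, hT⟩ := arcCount_eq_sum n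
  rw [hT]
  exact Submodule.sum_mem _ fun r _ =>
    configCount_mem_hyperfigurationModule (Nat.card_fin n).le r

lemma hyperfigurationModule_eq_span {n : ℕ} {R : Finset IncidenceTriple}
    (hR : ↑R ⊆ hyperfigurations n)
    (hiso : ∀ s ∈ hyperfigurations n, ∃! t, t ∈ R ∧ PSIso s t) :
    hyperfigurationModule n = Submodule.span ℤ[X] (insert 1 (strongRealCount '' R)) := by
  have himage : strongRealCount '' hyperfigurations n = strongRealCount '' R := by
    refine subset_antisymm ?_ (Set.image_mono hR)
    rintro _ ⟨s, hs, rfl⟩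
    obtain ⟨t, ⟨ht, hst⟩, -⟩ := hiso s hs
    exact ⟨t, ht, strongRealCount_eq_of_psIso hs.1.isSupported hst⟩
  rw [hyperfigurationModule, himage]

lemma exists_eq_of_mem_span_insert_image {A M α : Type*} [Semiring A] [AddCommMonoid M] [Module A M]
    {v : α → M} {s : Finset α} {x y : M} (hx : x ∈ Submodule.span A (insert y (v '' s))) :
    ∃ (a : A) (c : α → A), x = a • y + ∑ i ∈ s, c i • v i := by
  obtain ⟨a, z, hz, rfl⟩ := Submodule.mem_span_insert.1 hx
  obtain ⟨c, hc, rfl⟩ := (Finsupp.mem_span_image_iff_linearCombination A).1 hz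
  refine ⟨a, c, ?_⟩
  rw [Finsupp.linearCombination_apply,
    Finsupp.sum_of_support_subset c (Finset.coe_subset.1 hc) _ fun i _ => zero_smul A (v i)]

end Main

/-- For every `n ≥ 1` there are integer polynomials `p` and `p_h`, one for each isomorphism
class of hyperfigurations on at most `n` points (encoded by a finite set `R` of
representatives, one per isomorphism class, with coefficient polynomials `coef`), such that
for every prime power `q`, `C_{n,4}(q) = p(q) + ∑_h p_h(q) · A_h(4, q)`. -/
theorem count_arcs_P3 (n : ℕ) (hn : 1 ≤ n) :
    ∃ (p : Polynomial ℤ) (R : Finset (Finset ℕ × Finset (Finset ℕ) × Finset (Finset ℕ)))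
      (coef : Finset ℕ × Finset (Finset ℕ) × Finset (Finset ℕ) → Polynomial ℤ),
      (∀ s ∈ R, IsHyperfiguration s.1 s.2.1 s.2.2 ∧ s.1.card ≤ n) ∧
      (∀ P L H, IsHyperfiguration P L H → P.card ≤ n → ∃! t, t ∈ R ∧ PSIso (P, L, H) t) ∧
      ∀ (F : Type) [Field F] [Fintype F], ∀ q : ℕ, q = Fintype.card F →
        (Nat.card {σ : Fin n → ℙ F (Fin 4 → F) // IsArc4 F σ} : ℤ) =
          p.eval (q : ℤ) +
            ∑ s ∈ R, (coef s).eval (q : ℤ) *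
              (Nat.card {σ : {x // x ∈ s.1} → ℙ F (Fin 4 → F) //
                IsStrongReal3 F s.1 s.2.1 s.2.2 σ} : ℤ) := by
  obtain ⟨R, hR, hiso⟩ := exists_hyperfiguration_representatives n
  have hmem := arcCount_mem_hyperfigurationModule n
  rw [hyperfigurationModule_eq_span hR hiso] at hmem
  obtain ⟨p, coef, hcount⟩ := exists_eq_of_mem_span_insert_image hmem
  refine ⟨p, R, coef, fun s hs => hR hs, fun P L H h hcard => hiso (P, L, H) ⟨h, hcard⟩, ?_⟩
  rintro F _ _ q rfl
  have hF := congrFun hcount ⟨F⟩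
  simp only [Pi.add_apply, Finset.sum_apply, FinField.smul_apply, Pi.one_apply, mul_one,
    Nat.card_eq_fintype_card] at hF
  exact hF
end

section
/- For every prime power q, the number of ordered 6-arcs in P^3(F_q) is C_{6,4}(q) = (q^2 + q + 1)(q^2 + 1)(q + 1)^2 (q − 1)^3 (q − 2)(q − 3)(q − 4) · q^6. -/
open scoped LinearAlgebra.Projectivization

/-!
Rescaling representatives turns arcs of `n + 2` points in `ℙⁿ⁻¹` into families of `n + 2` vectors in
general position in a space of dimension `n`. In such a family the first `n` vectors form a basis,
and the last two are given in it by a `2 × n` matrix `A`. The linear relations of the family form a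
plane, so Gale duality replaces general position by a condition on `n + 2` vectors of that plane,
the rows of `galeDual A`: they are pairwise independent. This means that the entries of `A` are
nonzero and the ratios `A 1 i / A 0 i` are distinct, which leaves `(q - 1)ⁿ` choices of the row
`A 0` and `(q - 1)(q - 2)⋯(q - n)` choices of the ratios.
-/

section GeneralPosition

open Finset Module

variable {K V κ : Type*} [Field K] [AddCommGroup V] [Module K V]

/-- A family of vectors is in general position if any `finrank K V` or fewer of its members are
linearly independent. Applied to representatives of projective points, this is the notion of an
arc in `ℙ K V`. -/
def InGeneralPosition (K : Type*) {V κ : Type*} [Field K] [AddCommGroup V] [Module K V]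
    (v : κ → V) : Prop :=
  ∀ s : Finset κ, #s ≤ finrank K V → LinearIndepOn K v s

theorem InGeneralPosition.linearIndependent_comp {v : κ → V} (hv : InGeneralPosition K v)
    {ι : Type*} [Fintype ι] {e : ι → κ} (he : e.Injective)
    (hι : Fintype.card ι ≤ finrank K V) : LinearIndependent K (v ∘ e) := by
  classical
  rw [← linearIndepOn_range_iff he, ← Set.image_univ, ← coe_univ, ← coe_image]
  exact hv _ (card_image_le.trans hι)

theorem InGeneralPosition.ne_zero {v : κ → V} (hv : InGeneralPosition K v)
    (hV : finrank K V ≠ 0) (i : κ) : v i ≠ 0 :=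
  (hv {i} (by simpa [Nat.one_le_iff_ne_zero])).ne_zero (by simp)

theorem inGeneralPosition_units_smul_iff (u : κ → Kˣ) (v : κ → V) :
    InGeneralPosition K (u • v) ↔ InGeneralPosition K v :=
  forall₂_congr fun s _ ↦ LinearIndependent.units_smul_iff (v ∘ (↑) : s → V) (u ∘ (↑))

theorem inGeneralPosition_comp_equiv_iff {κ' : Type*} (e : κ' ≃ κ) (v : κ → V) :
    InGeneralPosition K (v ∘ e) ↔ InGeneralPosition K v := by
  refine e.finsetCongr.forall_congr fun s ↦ ?_
  simp [linearIndepOn_equiv]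

theorem inGeneralPosition_iff_forall_sum_smul_eq_zero {ρ : Type*} [Fintype κ] [Fintype ρ]
    (hκ : Fintype.card κ = finrank K V + Fintype.card ρ) (v : κ → V) :
    InGeneralPosition K v ↔
      ∀ f : κ → K, ∑ k, f k • v k = 0 → ∀ e : ρ ↪ κ, f ∘ e = 0 → f = 0 := by
  classical
  simp only [InGeneralPosition, linearIndepOn_finset_iff]
  constructor
  · intro hv f hf e hfe
    have he (k : κ) (hk : k ∉ (univ.map e)ᶜ) : f k = 0 := by
      obtain ⟨r, -, rfl⟩ := mem_map.1 (notMem_compl.1 hk)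
      exact congrFun hfe r
    have hsum : ∑ k ∈ (univ.map e)ᶜ, f k • v k = 0 := by
      rw [← hf]
      exact sum_subset (subset_univ _) fun k _ hk ↦ by rw [he k hk, zero_smul]
    have hcard : #(univ.map e)ᶜ ≤ finrank K V := by
      simp [card_compl, hκ]
    funext k
    by_cases hk : k ∈ (univ.map e)ᶜ
    · exact hv _ hcard f hsum k hk
    · exact he k hk
  · intro hv s hs f hf k hk
    obtain ⟨e, he⟩ : ∃ e : ρ ↪ κ, Set.range e ⊆ ↑sᶜ := by
      refine Function.Embedding.exists_of_card_le_finset ?_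
      rw [card_compl]
      lia
    have hzero := hv (fun k ↦ if k ∈ s then f k else 0) (by simpa [ite_smul] using hf) e
      (funext fun r ↦ if_neg (by simpa using he ⟨r, rfl⟩))
    simpa [hk] using congrFun hzero k

end GeneralPosition

section Arcs

variable {F : Type} [Field F]

theorem not_coplanar4_iff (p : Fin 4 → ℙ F (Fin 4 → F)) :
    ¬ Coplanar4 F (p 0) (p 1) (p 2) (p 3) ↔ Projectivization.Independent p := by
  have hspan : Submodule.span F (Set.range (Projectivization.rep ∘ p)) =
      (p 0).submodule ⊔ (p 1).submodule ⊔ (p 2).submodule ⊔ (p 3).submodule := by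
    have hrange : Set.range (Projectivization.rep ∘ p) =
        {(p 0).rep, (p 1).rep, (p 2).rep, (p 3).rep} := by
      ext v
      simp [Fin.exists_fin_succ, eq_comm]
    simp only [hrange, Submodule.span_insert, Projectivization.submodule_eq, sup_assoc]
  rw [Projectivization.independent_iff, linearIndependent_iff_card_le_finrank_span, Set.finrank,
    hspan, Coplanar4, Fintype.card_fin]
  lia

theorem isArc4_iff_s6 {n : ℕ} (hn : 4 ≤ n) (σ : Fin n → ℙ F (Fin 4 → F)) :
    IsArc4 F σ ↔ InGeneralPosition F (Projectivization.rep ∘ σ) := by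
  constructor
  · rintro ⟨-, hσ⟩ s hs
    obtain ⟨t, hst, ht⟩ := Finset.exists_superset_card_eq
      (hs.trans_eq (Module.finrank_fin_fun F)) (by simpa)
    let e := t.orderEmbOfFin ht
    have hind : Projectivization.Independent (σ ∘ e) :=
      (not_coplanar4_iff (σ ∘ e)).1 (hσ _ _ _ _ (by simp) (by simp) (by simp) (by simp) (by simp)
        (by simp))
    refine LinearIndepOn.mono ?_ (Finset.coe_subset.2 hst)
    rw [← t.range_orderEmbOfFin ht, linearIndepOn_range_iff e.injective]
    exact Projectivization.independent_iff.1 hind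
  · intro hσ
    refine ⟨fun i j hij ↦ ?_, fun a b c d hab hac had hbc hbd hcd ↦ ?_⟩
    · refine (hσ {i, j} ?_).injOn (by simp) (by simp) (congrArg Projectivization.rep hij)
      exact Finset.card_le_two.trans (by simp)
    · have he : Function.Injective ![a, b, c, d] := by
        simp [Function.Injective, Fin.forall_fin_succ, *, Ne.symm]
      exact (not_coplanar4_iff (σ ∘ ![a, b, c, d])).2
        (Projectivization.independent_iff.2 (hσ.linearIndependent_comp he (by simp)))

end Arcs

section GaleDuality

open Finset Module Matrix

variable {K V ι ρ : Type*} [Field K] [AddCommGroup V] [Module K V] [Fintype ι]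

theorem injective_div_iff_forall_sub_ne_zero {K ι : Type*} [Field K] {x y : ι → K}
    (hx : ∀ i, x i ≠ 0) :
    (Function.Injective fun i ↦ y i / x i) ↔ ∀ i j, i ≠ j → x i * y j - y i * x j ≠ 0 := by
  refine forall₂_congr fun i j ↦ ?_
  rw [div_eq_div_iff (hx i) (hx j), sub_ne_zero, mul_comm (x i), ne_comm (a := y j * x i), ne_eq,
    ne_eq, not_imp_not]

/-- The basis `b` followed by the vectors whose coordinates in `b` are the rows of `A`. -/
noncomputable def basisExtension (b : Basis ι K V) (A : Matrix ρ ι K) : ι ⊕ ρ → V :=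
  Sum.elim b fun r ↦ b.equivFun.symm (A r)

/-- The Gale dual of the configuration `basisExtension b A`: its columns form a basis of the space
of linear relations of that configuration. -/
def galeDual [DecidableEq ρ] (A : Matrix ρ ι K) : Matrix (ι ⊕ ρ) ρ K :=
  fromRows (-Aᵀ) 1

theorem basisExtension_injective2 :
    Function.Injective2 (basisExtension : Basis ι K V → Matrix ρ ι K → ι ⊕ ρ → V) := by
  intro b b' A A' h
  obtain rfl : b = b' := Basis.eq_of_apply_eq fun i ↦ congrFun h (.inl i)
  exact ⟨rfl, funext fun r ↦ b.equivFun.symm.injective (congrFun h (.inr r))⟩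

theorem InGeneralPosition.exists_basisExtension_eq [Nonempty ι] {v : ι ⊕ ρ → V}
    (hv : InGeneralPosition K v) (hι : Fintype.card ι = finrank K V) :
    ∃ (b : Basis ι K V) (A : Matrix ρ ι K), basisExtension b A = v := by
  have hli := hv.linearIndependent_comp Sum.inl_injective hι.le
  let b := basisOfLinearIndependentOfCardEqFinrank hli hι
  refine ⟨b, fun r ↦ b.equivFun (v (.inr r)), funext (Sum.rec (fun i ↦ ?_) fun r ↦ ?_)⟩
  · exact congrFun (coe_basisOfLinearIndependentOfCardEqFinrank hli hι) i
  · exact b.equivFun.symm_apply_apply _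

variable [Fintype ρ]

theorem sum_smul_basisExtension (b : Basis ι K V) (A : Matrix ρ ι K) (f : ι ⊕ ρ → K) :
    ∑ k, f k • basisExtension b A k =
      b.equivFun.symm (f ∘ Sum.inl + (f ∘ Sum.inr) ᵥ* A) := by
  rw [map_add, vecMul_eq_sum, map_sum, Fintype.sum_sum_type]
  simp [basisExtension, Basis.equivFun_symm_apply, smul_sum, smul_smul]

variable [DecidableEq ρ]

theorem sum_smul_basisExtension_eq_zero_iff (b : Basis ι K V) (A : Matrix ρ ι K)
    (f : ι ⊕ ρ → K) :
    ∑ k, f k • basisExtension b A k = 0 ↔ f = galeDual A *ᵥ (f ∘ Sum.inr) := by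
  rw [sum_smul_basisExtension, LinearEquiv.map_eq_zero_iff, galeDual, fromRows_mulVec]
  simp [funext_iff, neg_mulVec, mulVec_transpose, add_eq_zero_iff_eq_neg]

theorem inGeneralPosition_basisExtension_iff (b : Basis ι K V) (A : Matrix ρ ι K) :
    InGeneralPosition K (basisExtension b A) ↔
      ∀ e : ρ ↪ ι ⊕ ρ, ((galeDual A).submatrix e id).det ≠ 0 := by
  have hcard : Fintype.card (ι ⊕ ρ) = finrank K V + Fintype.card ρ := by
    rw [Fintype.card_sum, finrank_eq_card_basis b]
  rw [inGeneralPosition_iff_forall_sum_smul_eq_zero hcard]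
  simp only [sum_smul_basisExtension_eq_zero_iff]
  constructor
  · intro hv e hdet
    obtain ⟨p, hp, hzero⟩ := exists_mulVec_eq_zero_iff.2 hdet
    have hinr : (galeDual A *ᵥ p) ∘ Sum.inr = p := by simp [galeDual, fromRows_mulVec]
    have hrel := hv (galeDual A *ᵥ p) (by rw [hinr]) e hzero
    exact hp (by rw [← hinr, hrel, Pi.zero_comp])
  · intro hdet f hf e hfe
    have hinr : f ∘ Sum.inr = 0 := by
      refine eq_zero_of_mulVec_eq_zero (hdet e) ?_
      rwa [hf] at hfe
    rw [hf, hinr, mulVec_zero]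

theorem inGeneralPosition_basisExtension_two_iff (b : Basis ι K V) (A : Matrix (Fin 2) ι K) :
    InGeneralPosition K (basisExtension b A) ↔
      (∀ i, A 0 i ≠ 0) ∧ (∀ i, A 1 i ≠ 0) ∧ Function.Injective fun i ↦ A 1 i / A 0 i := by
  have hdet : InGeneralPosition K (basisExtension b A) ↔ ∀ k l, k ≠ l →
      galeDual A k 0 * galeDual A l 1 - galeDual A k 1 * galeDual A l 0 ≠ 0 := by
    simp only [inGeneralPosition_basisExtension_iff, det_fin_two, submatrix_apply, id]
    refine ⟨fun h k l hkl ↦ h ⟨![k, l], ?_⟩, fun h e ↦ h _ _ (e.injective.ne (by decide))⟩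
    simp [Function.Injective, Fin.forall_fin_two, hkl, hkl.symm]
  have hminors : (∀ k l, k ≠ l →
      galeDual A k 0 * galeDual A l 1 - galeDual A k 1 * galeDual A l 0 ≠ 0) ↔
      (∀ i, A 0 i ≠ 0) ∧ (∀ i, A 1 i ≠ 0) ∧ ∀ i j, i ≠ j → A 0 i * A 1 j - A 1 i * A 0 j ≠ 0 := by
    refine ⟨fun h ↦ ⟨fun i ↦ ?_, fun i ↦ ?_, fun i j hij ↦ ?_⟩, fun ⟨hA₀, hA₁, hA⟩ ↦ ?_⟩
    · simpa [galeDual] using h (.inl i) (.inr 1) Sum.inl_ne_inr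
    · simpa [galeDual] using h (.inl i) (.inr 0) Sum.inl_ne_inr
    · simpa [galeDual] using h (.inl i) (.inl j) (Sum.inl_injective.ne hij)
    · simpa [galeDual, Fin.forall_fin_two, hA₀, hA₁, sub_eq_add_neg] using hA
  rw [hdet, hminors]
  exact and_congr_right fun hA ↦
    and_congr_right' (injective_div_iff_forall_sub_ne_zero hA).symm

/-- A pair of nowhere zero rows with injective ratio, encoded by the first row and the ratio. -/
def nowhereZeroInjectiveRatioEquiv (K ι : Type*) [Field K] :
    {A : Matrix (Fin 2) ι K //
      (∀ i, A 0 i ≠ 0) ∧ (∀ i, A 1 i ≠ 0) ∧ Function.Injective fun i ↦ A 1 i / A 0 i} ≃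
      (ι → Kˣ) × (ι ↪ Kˣ) where
  toFun A :=
    (fun i ↦ .mk0 (A.1 0 i) (A.2.1 i),
      ⟨fun i ↦ .mk0 (A.1 1 i / A.1 0 i) (div_ne_zero (A.2.2.1 i) (A.2.1 i)), fun _ _ hij ↦
        A.2.2.2 (by simpa using hij)⟩)
  invFun p :=
    ⟨![fun i ↦ p.1 i, fun i ↦ p.1 i * p.2 i], by simp, by simp,
      by simpa using! Units.val_injective.comp p.2.injective⟩
  left_inv A := by
    ext r i
    fin_cases r
    · rfl
    · exact mul_div_cancel₀ _ (A.2.1 i)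
  right_inv p := by ext <;> simp

end GaleDuality

section Counting

open Finset Module

variable {K V κ : Type*} [Field K] [AddCommGroup V] [Module K V]

theorem prod_range_pow_sub_pow {R : Type*} [CommRing R] (q : R) (n : ℕ) :
    ∏ i ∈ range n, (q ^ n - q ^ i) = q ^ n.choose 2 * ∏ i ∈ Icc 1 n, (q ^ i - 1) := by
  induction n with
  | zero => simp
  | succ n ih =>
    have hfactor (i : ℕ) : q ^ (n + 1) - q ^ (i + 1) = q * (q ^ n - q ^ i) := by ring
    rw [prod_range_succ', prod_congr rfl fun i _ ↦ hfactor i, prod_mul_distrib, ih,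
      prod_Icc_succ_top (by lia), Nat.choose_succ_succ' n 1, Nat.choose_one_right]
    simp only [prod_const, card_range, pow_zero, Nat.reduceAdd]
    ring

theorem cast_descFactorial_pred {R : Type*} [CommRing R] {q : ℕ} (hq : q ≠ 0) (n : ℕ) :
    ((q - 1).descFactorial n : R) = ∏ i ∈ Icc 1 n, ((q : R) - i) := by
  rw [← descPochhammer_eval_eq_descFactorial, descPochhammer_eval_eq_prod_range,
    Nat.cast_pred (Nat.pos_of_ne_zero hq)]
  induction n with
  | zero => simp
  | succ n ih =>
    rw [prod_range_succ, ih, prod_Icc_succ_top (by lia)]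
    push_cast
    ring

theorem card_basis [Fintype K] [Finite V] :
    (Nat.card (Basis (Fin (finrank K V)) K V) : ℤ) =
      (Fintype.card K : ℤ) ^ (finrank K V).choose 2 *
        ∏ i ∈ Icc 1 (finrank K V), ((Fintype.card K : ℤ) ^ i - 1) := by
  have hcard : Nat.card (Basis (Fin (finrank K V)) K V) =
      Nat.card {v : Fin (finrank K V) → V // LinearIndependent K v} := by
    refine Nat.card_eq_of_bijective (fun b ↦ ⟨b, b.linearIndependent⟩)
      ⟨fun b b' h ↦ DFunLike.coe_injective (congrArg Subtype.val h), fun v ↦ ?_⟩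
    refine ⟨.mk v.2 (v.2.span_eq_top_of_card_eq_finrank' ?_).ge, Subtype.ext (Basis.coe_mk ..)⟩
    exact Fintype.card_fin _
  rw [hcard, card_linearIndependent le_rfl, ← prod_range_pow_sub_pow, Nat.cast_prod,
    ← Fin.prod_univ_eq_prod_range]
  refine prod_congr rfl fun i _ ↦ ?_
  rw [Nat.cast_sub (Nat.pow_le_pow_right Fintype.card_pos i.is_lt.le), Nat.cast_pow, Nat.cast_pow]

theorem card_inGeneralPosition_sum {ι : Type*} [Fintype ι] [Nonempty ι]
    (hι : Fintype.card ι = finrank K V) :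
    Nat.card {v : ι ⊕ Fin 2 → V // InGeneralPosition K v} =
      Nat.card (Basis ι K V) * Nat.card ((ι → Kˣ) × (ι ↪ Kˣ)) := by
  rw [← Nat.card_congr (nowhereZeroInjectiveRatioEquiv K ι), ← Nat.card_prod]
  symm
  refine Nat.card_eq_of_bijective
    (fun p ↦ ⟨basisExtension p.1 p.2.1, (inGeneralPosition_basisExtension_two_iff ..).2 p.2.2⟩)
    ⟨fun p p' h ↦ ?_, fun ⟨v, hv⟩ ↦ ?_⟩
  · obtain ⟨hb, hA⟩ := basisExtension_injective2 (congrArg Subtype.val h)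
    exact Prod.ext hb (Subtype.ext hA)
  · obtain ⟨b, A, rfl⟩ := hv.exists_basisExtension_eq hι
    exact ⟨(b, ⟨A, (inGeneralPosition_basisExtension_two_iff b A).1 hv⟩), rfl⟩

theorem card_inGeneralPosition [Fintype K] [Finite V] [Fintype κ] (hV : finrank K V ≠ 0)
    (hκ : Fintype.card κ = finrank K V + 2) :
    (Nat.card {v : κ → V // InGeneralPosition K v} : ℤ) =
      (Fintype.card K : ℤ) ^ (finrank K V).choose 2 *
        (∏ i ∈ Icc 1 (finrank K V), ((Fintype.card K : ℤ) ^ i - 1)) *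
        (((Fintype.card K : ℤ) - 1) ^ finrank K V *
          ∏ i ∈ Icc 1 (finrank K V), ((Fintype.card K : ℤ) - i)) := by
  classical
  have : Nonempty (Fin (finrank K V)) := Fin.pos_iff_nonempty.1 (Nat.pos_of_ne_zero hV)
  let e : κ ≃ Fin (finrank K V) ⊕ Fin 2 := Fintype.equivOfCardEq (by simp [hκ])
  have hreindex : Nat.card {v : Fin (finrank K V) ⊕ Fin 2 → V // InGeneralPosition K v} =
      Nat.card {v : κ → V // InGeneralPosition K v} :=
    Nat.card_congr <| (e.symm.arrowCongr (.refl V)).subtypeEquiv fun v ↦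
      (inGeneralPosition_comp_equiv_iff e v).symm
  have hrows : Nat.card ((Fin (finrank K V) → Kˣ) × (Fin (finrank K V) ↪ Kˣ)) =
      (Fintype.card K - 1) ^ finrank K V * (Fintype.card K - 1).descFactorial (finrank K V) := by
    simp [Fintype.card_units, Fintype.card_embedding_eq]
  rw [← hreindex, card_inGeneralPosition_sum (Fintype.card_fin _), hrows, Nat.cast_mul, card_basis,
    Nat.cast_mul, Nat.cast_pow, Nat.cast_pred Fintype.card_pos,
    cast_descFactorial_pred Fintype.card_ne_zero]

theorem card_projective_inGeneralPosition_mul [Fintype κ] (hV : finrank K V ≠ 0) :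
    Nat.card {σ : κ → ℙ K V // InGeneralPosition K (Projectivization.rep ∘ σ)} *
        Nat.card Kˣ ^ Fintype.card κ =
      Nat.card {v : κ → V // InGeneralPosition K v} := by
  rw [← Nat.card_eq_fintype_card, ← Nat.card_fun, ← Nat.card_prod]
  refine Nat.card_eq_of_bijective
    (fun p ↦ ⟨p.2 • (Projectivization.rep ∘ p.1.1),
      (inGeneralPosition_units_smul_iff ..).2 p.1.2⟩)
    ⟨fun ⟨⟨σ, hσ⟩, u⟩ ⟨⟨τ, hτ⟩, w⟩ h ↦ ?_, fun ⟨v, hv⟩ ↦ ?_⟩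
  · have hrep (i : κ) : u i • (σ i).rep = w i • (τ i).rep := congrFun (congrArg Subtype.val h) i
    obtain rfl : σ = τ := by
      funext i
      rw [← (σ i).mk_rep, ← (τ i).mk_rep, Projectivization.mk_eq_mk_iff]
      exact ⟨(u i)⁻¹ * w i, by rw [mul_smul, ← hrep i, inv_smul_smul]⟩
    obtain rfl : u = w := funext fun i ↦
      Units.ext (smul_left_injective K (σ i).rep_nonzero (hrep i))
    rfl
  · choose a ha using fun i ↦ Projectivization.exists_smul_eq_mk_rep K (v i) (hv.ne_zero hV i)
    have hv_eq : a⁻¹ • (Projectivization.rep ∘ fun i ↦ .mk K (v i) (hv.ne_zero hV i)) = v :=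
      funext fun i ↦ inv_smul_eq_iff.2 (ha i).symm
    refine ⟨⟨⟨fun i ↦ .mk K (v i) (hv.ne_zero hV i), ?_⟩, a⁻¹⟩, Subtype.ext hv_eq⟩
    rwa [← inGeneralPosition_units_smul_iff a⁻¹, hv_eq]

theorem C64_formula_general [Fintype K] [Fintype κ] (hV : finrank K V ≠ 0)
    (hκ : Fintype.card κ = finrank K V + 2) :
    (Nat.card {σ : κ → ℙ K V // InGeneralPosition K (Projectivization.rep ∘ σ)} : ℤ) =
      (Fintype.card K : ℤ) ^ (finrank K V).choose 2 *
        ∏ i ∈ Icc 2 (finrank K V),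
          (((Fintype.card K : ℤ) ^ i - 1) * ((Fintype.card K : ℤ) - i)) := by
  have : FiniteDimensional K V := Module.finite_of_finrank_pos (Nat.pos_of_ne_zero hV)
  have : Finite V := Module.finite_of_finite K
  have hq : (Fintype.card K : ℤ) - 1 ≠ 0 :=
    sub_ne_zero.2 (Nat.cast_ne_one.2 Fintype.one_lt_card.ne')
  have hunits : (Nat.card Kˣ : ℤ) = Fintype.card K - 1 := by
    rw [Nat.card_units, Nat.card_eq_fintype_card, Nat.cast_pred Fintype.card_pos]
  have hsplit (f : ℕ → ℤ) :
      ∏ i ∈ Icc 1 (finrank K V), f i = f 1 * ∏ i ∈ Icc 2 (finrank K V), f i :=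
    (mul_prod_Ioc_eq_prod_Icc (Nat.one_le_iff_ne_zero.2 hV)).symm
  refine mul_right_cancel₀ (pow_ne_zero (Fintype.card κ) hq) ?_
  rw [← hunits, ← Nat.cast_pow, ← Nat.cast_mul, card_projective_inGeneralPosition_mul hV,
    card_inGeneralPosition hV hκ, Nat.cast_pow, hunits, hκ, hsplit, hsplit, prod_mul_distrib]
  ring

end Counting

/-- For every prime power `q`,
`C_{6,4}(q) = (q^2+q+1)(q^2+1)(q+1)^2 (q-1)^3 (q-2)(q-3)(q-4) q^6`. -/
theorem C64_formula (F : Type) [Field F] [Fintype F] (q : ℕ) (hq : q = Fintype.card F) :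
    (Nat.card {σ : Fin 6 → ℙ F (Fin 4 → F) // IsArc4 F σ} : ℤ) =
      ((q : ℤ)^2 + q + 1) * ((q : ℤ)^2 + 1) * ((q : ℤ) + 1)^2 * ((q : ℤ) - 1)^3 *
        ((q : ℤ) - 2) * ((q : ℤ) - 3) * ((q : ℤ) - 4) * (q : ℤ)^6 := by
  subst hq
  have hV : Module.finrank F (Fin 4 → F) = 4 := Module.finrank_fin_fun F
  rw [Nat.card_congr (Equiv.subtypeEquivRight (isArc4_iff_s6 (by simp))),
    C64_formula_general (by simp) (by simp), hV]
  simp only [Nat.choose, add_zero, Nat.reduceAdd, Nat.reduceLeDiff, Finset.prod_Icc_succ_top,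
    Finset.Icc_self, Finset.prod_singleton, Nat.cast_ofNat]
  ring
end
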